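/- arXiv:2205.13538 — 10 statements merged into one kernel-verified Lean document; each statement's English description precedes it below -/
import Mathlib

section
/- Let d ≥ 2 be an integer and let w ∈ {0,1}^d be a winning vector with binary entries, and set K = |{i ∈ {1,…,d} : w_i = 1}|. Then the supremum of ℐ_w(π) over π ∈ Δ_d equals 0 if K = 0, equals ln(K + (d − K)·d^{−d/(d−K)}) if 0 < K < d, and equals ln d if K = d. -/
/-- The standard simplex Δ_d: nonnegative entries summing to 1. -/
def inSimplex {d : ℕ} (p : Fin d → ℝ) : Prop :=
  (∀ i, 0 ≤ p i) ∧ ∑ i, p i = 1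

/-- The output distribution W̄π with W̄_{ij} = w_i δ_{ij} + (1 − w_j)/d. -/
noncomputable def Wbar {d : ℕ} (w p : Fin d → ℝ) (i : Fin d) : ℝ :=
  w i * p i + (∑ j, (1 - w j) * p j) / d

/-- The mutual information ℐ_w(π) = H(W̄π) + ⟨π, w⟩ ln d − ln d, entropy in nats. -/
noncomputable def mutInfo {d : ℕ} (w p : Fin d → ℝ) : ℝ :=
  (∑ i, Real.negMulLog (Wbar w p i)) + (∑ i, p i * w i) * Real.log d - Real.log d

/-!
For `p` in the simplex, `ℐ_w(p) = H(q) + ⟨q, ℓ⟩` with `q = W̄p`, as soon as the vector `ℓ` solves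
the adjoint equation `W̄ᵀℓ = (w - 1) ln d`. By Gibbs' variational principle the right-hand side is
at most `ln ∑ exp ℓᵢ`, with equality when `q` is the softmax of `ℓ`, so it remains to find a
preimage of the softmax under `W̄` in the simplex. For binary `w` with `K < d` ones, `ℓ = (1 - w) t`
with `t = -d ln d / (d - K)` is a solution, and `exp t = d ^ (-d / (d - K))`; for `w = 1`
take `ℓ = 0`.
-/

open Finset Real

section Gibbs

variable {ι : Type*} [Fintype ι]

lemma nonempty_of_mem_stdSimplex {q : ι → ℝ} (hq : q ∈ stdSimplex ℝ ι) : Nonempty ι :=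
  not_isEmpty_iff.1 fun _ ↦ by simpa using hq.2

/-- The Gibbs distribution with weights proportional to `exp (ℓ i)`. -/
noncomputable def softmax (ℓ : ι → ℝ) (i : ι) : ℝ :=
  exp (ℓ i) / ∑ j, exp (ℓ j)

lemma sum_exp_pos [Nonempty ι] (ℓ : ι → ℝ) : 0 < ∑ i, exp (ℓ i) :=
  sum_pos (fun i _ ↦ exp_pos (ℓ i)) univ_nonempty

lemma softmax_pos [Nonempty ι] (ℓ : ι → ℝ) (i : ι) : 0 < softmax ℓ i :=
  div_pos (exp_pos _) (sum_exp_pos ℓ)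

lemma sum_softmax [Nonempty ι] (ℓ : ι → ℝ) : ∑ i, softmax ℓ i = 1 := by
  simp only [softmax, ← sum_div, div_self (sum_exp_pos ℓ).ne']

lemma log_softmax [Nonempty ι] (ℓ : ι → ℝ) (i : ι) :
    log (softmax ℓ i) = ℓ i - log (∑ j, exp (ℓ j)) := by
  rw [softmax, log_div (exp_pos _).ne' (sum_exp_pos ℓ).ne', log_exp]

lemma sum_negMulLog_add_sum_mul_log_nonpos {q m : ι → ℝ} (hq : q ∈ stdSimplex ℝ ι)
    (hm : ∀ i, 0 < m i) (hm_sum : ∑ i, m i = 1) :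
    ∑ i, negMulLog (q i) + ∑ i, q i * log (m i) ≤ 0 := by
  have cancel (i : ι) : m i * (q i / m i) = q i := mul_div_cancel₀ _ (hm i).ne'
  have term_eq (i : ι) :
      negMulLog (q i) + q i * log (m i) = m i * negMulLog (q i / m i) := by
    have negMulLog_q : negMulLog (q i) =
        q i / m i * negMulLog (m i) + m i * negMulLog (q i / m i) := by
      rw [← negMulLog_mul, cancel]
    rw [negMulLog_q, negMulLog_def]
    linear_combination -log (m i) * cancel i
  have jensen := concaveOn_negMulLog.le_map_sum (t := univ) (w := m) (p := fun i ↦ q i / m i)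
    (fun i _ ↦ (hm i).le) hm_sum (fun i _ ↦ div_nonneg (hq.1 i) (hm i).le)
  simp only [smul_eq_mul, cancel, hq.2, negMulLog_one] at jensen
  simpa only [← sum_add_distrib, term_eq] using jensen

lemma sum_negMulLog_add_sum_mul_le_log_sum_exp {q : ι → ℝ} (hq : q ∈ stdSimplex ℝ ι)
    (ℓ : ι → ℝ) :
    ∑ i, negMulLog (q i) + ∑ i, q i * ℓ i ≤ log (∑ i, exp (ℓ i)) := by
  have := nonempty_of_mem_stdSimplex hq
  have gibbs := sum_negMulLog_add_sum_mul_log_nonpos hq (softmax_pos ℓ) (sum_softmax ℓ)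
  simp only [log_softmax, mul_sub, sum_sub_distrib, ← sum_mul, hq.2, one_mul] at gibbs
  linarith

lemma sum_negMulLog_softmax_add_sum_mul [Nonempty ι] (ℓ : ι → ℝ) :
    ∑ i, negMulLog (softmax ℓ i) + ∑ i, softmax ℓ i * ℓ i = log (∑ i, exp (ℓ i)) := by
  have term_eq (i : ι) : negMulLog (softmax ℓ i) + softmax ℓ i * ℓ i =
      softmax ℓ i * log (∑ j, exp (ℓ j)) := by
    rw [negMulLog, log_softmax]
    ring
  simp only [← sum_add_distrib, term_eq, ← sum_mul, sum_softmax, one_mul]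

end Gibbs

section Channel

variable {d : ℕ} {w p ℓ : Fin d → ℝ}

lemma inSimplex.nonempty (hp : inSimplex p) : Nonempty (Fin d) :=
  nonempty_of_mem_stdSimplex hp

lemma inSimplex.natCast_pos (hp : inSimplex p) : (0 : ℝ) < d :=
  Nat.cast_pos.2 (Fin.pos_iff_nonempty.2 hp.nonempty)

lemma sum_Wbar_mul (w p ℓ : Fin d → ℝ) :
    ∑ i, Wbar w p i * ℓ i = ∑ j, p j * (w j * ℓ j + (1 - w j) * ((∑ i, ℓ i) / d)) := by
  simp only [Wbar, add_mul, mul_add, sum_add_distrib, ← mul_sum, ← mul_assoc, ← sum_mul]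
  simp only [mul_comm (p _)]
  ring

lemma sum_Wbar (hp : inSimplex p) : ∑ i, Wbar w p i = 1 := by
  have := sum_Wbar_mul w p 1
  simpa [div_self hp.natCast_pos.ne', hp.2] using this

lemma inSimplex_Wbar (hw : ∀ i, w i ∈ Set.Icc 0 1) (hp : inSimplex p) :
    inSimplex (Wbar w p) := by
  refine ⟨fun i ↦ ?_, sum_Wbar hp⟩
  have win_nonneg : 0 ≤ w i * p i := mul_nonneg (hw i).1 (hp.1 i)
  have lose_nonneg : 0 ≤ ∑ j, (1 - w j) * p j :=
    sum_nonneg fun j _ ↦ mul_nonneg (sub_nonneg.2 (hw j).2) (hp.1 j)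
  exact add_nonneg win_nonneg (div_nonneg lose_nonneg d.cast_nonneg)

/-- The adjoint equation `W̄ᵀℓ = (w - 1) ln d`, written out by coordinates. Its solutions turn the
linear part of the mutual information into a linear function of the output distribution `W̄p`. -/
def IsDualPotential (w ℓ : Fin d → ℝ) : Prop :=
  ∀ j, w j * ℓ j + (1 - w j) * ((∑ i, ℓ i) / d) = (w j - 1) * log d

namespace IsDualPotential

lemma mutInfo_eq (hℓ : IsDualPotential w ℓ) (hp : inSimplex p) :
    mutInfo w p = ∑ i, negMulLog (Wbar w p i) + ∑ i, Wbar w p i * ℓ i := by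
  have linear_part : ∑ i, Wbar w p i * ℓ i = (∑ i, p i * w i) * log d - log d := by
    simp_rw [sum_Wbar_mul, hℓ _, ← mul_assoc, ← sum_mul, mul_sub, mul_one, sum_sub_distrib,
      hp.2, sub_mul, one_mul]
  rw [linear_part, mutInfo, add_sub_assoc]

lemma mutInfo_le (hℓ : IsDualPotential w ℓ) (hw : ∀ i, w i ∈ Set.Icc 0 1)
    (hp : inSimplex p) : mutInfo w p ≤ log (∑ i, exp (ℓ i)) := by
  rw [hℓ.mutInfo_eq hp]
  exact sum_negMulLog_add_sum_mul_le_log_sum_exp (inSimplex_Wbar hw hp) ℓ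

lemma mutInfo_eq_log_sum_exp (hℓ : IsDualPotential w ℓ) (hp : inSimplex p)
    (hWp : Wbar w p = softmax ℓ) : mutInfo w p = log (∑ i, exp (ℓ i)) := by
  have := hp.nonempty
  rw [hℓ.mutInfo_eq hp, hWp, sum_negMulLog_softmax_add_sum_mul]

lemma isGreatest_mutInfo (hℓ : IsDualPotential w ℓ) (hw : ∀ i, w i ∈ Set.Icc 0 1)
    (hp : inSimplex p) (hWp : Wbar w p = softmax ℓ) :
    IsGreatest {y | ∃ p : Fin d → ℝ, inSimplex p ∧ y = mutInfo w p} (log (∑ i, exp (ℓ i))) := by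
  refine ⟨⟨p, hp, (hℓ.mutInfo_eq_log_sum_exp hp hWp).symm⟩, ?_⟩
  rintro _ ⟨p', hp', rfl⟩
  exact hℓ.mutInfo_le hw hp'

end IsDualPotential

lemma isGreatest_mutInfo_one (hd : d ≠ 0) :
    IsGreatest {y | ∃ p : Fin d → ℝ, inSimplex p ∧ y = mutInfo 1 p} (log d) := by
  have potential : IsDualPotential (1 : Fin d → ℝ) 0 := fun j ↦ by simp
  have uniform : inSimplex (fun _ : Fin d ↦ (d : ℝ)⁻¹) := ⟨fun _ ↦ by positivity, by simp [hd]⟩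
  have output : Wbar 1 (fun _ : Fin d ↦ (d : ℝ)⁻¹) = softmax 0 := by
    ext i
    simp [Wbar, softmax]
  simpa using potential.isGreatest_mutInfo (fun _ ↦ by simp) uniform output

end Channel

section BinaryVector

variable {ι : Type*} {w : ι → ℝ}

lemma mem_Icc_of_binary (hw : ∀ i, w i = 0 ∨ w i = 1) (i : ι) : w i ∈ Set.Icc 0 1 := by
  rcases hw i with h | h <;> simp [h]

lemma sum_eq_card_filter_of_binary [Fintype ι] (hw : ∀ i, w i = 0 ∨ w i = 1) :
    ∑ i, w i = #{i | w i = 1} := by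
  rw [← sum_boole]
  refine sum_congr rfl fun i _ ↦ ?_
  rcases hw i with h | h <;> simp [h]

lemma exp_one_sub_mul_of_binary (hw : ∀ i, w i = 0 ∨ w i = 1) (t : ℝ) (i : ι) :
    exp ((1 - w i) * t) = w i + (1 - w i) * exp t := by
  rcases hw i with h | h <;> simp [h]

end BinaryVector

section BinaryChannel

variable {d : ℕ} {w : Fin d → ℝ} {t : ℝ}

lemma sum_one_sub (w : Fin d → ℝ) : ∑ i, (1 - w i) = d - ∑ i, w i := by
  simp

lemma isDualPotential_of_binary (hw : ∀ i, w i = 0 ∨ w i = 1)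
    (ht : (d - ∑ i, w i) * t = -d * log d) : IsDualPotential w (fun i ↦ (1 - w i) * t) := by
  intro j
  have hd : (d : ℝ) ≠ 0 := Nat.cast_ne_zero.2 j.pos.ne'
  rw [← sum_mul, sum_one_sub, ht, neg_mul, neg_div, mul_div_cancel_left₀ _ hd]
  rcases hw j with h | h <;> simp [h]

lemma sum_exp_one_sub_mul_of_binary (hw : ∀ i, w i = 0 ∨ w i = 1) (t : ℝ) :
    ∑ i, exp ((1 - w i) * t) = ∑ i, w i + (d - ∑ i, w i) * exp t := by
  simp only [exp_one_sub_mul_of_binary hw, sum_add_distrib, ← sum_mul, sum_one_sub]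

/-- The input distribution which, for binary `w`, the channel `W̄` sends to the softmax of
`(1 - w) t`: mass `d exp t / Z` is spread evenly over the losing symbols and the rest evenly over
the winning ones, where `Z` is the normalizing sum of the softmax. -/
noncomputable def optimalInput (w : Fin d → ℝ) (t : ℝ) (i : Fin d) : ℝ :=
  (w i * (1 - exp t) + (1 - w i) * (d * exp t / (d - ∑ j, w j))) /
    (∑ j, w j + (d - ∑ j, w j) * exp t)

lemma inSimplex_optimalInput (hw : ∀ i, w i ∈ Set.Icc 0 1) (hlt : ∑ i, w i < d) (ht : t ≤ 0) :
    inSimplex (optimalInput w t) := by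
  have gap_pos : 0 < d - ∑ i, w i := sub_pos.2 hlt
  have sum_w_nonneg : 0 ≤ ∑ i, w i := sum_nonneg fun i _ ↦ (hw i).1
  have norm_pos : 0 < ∑ i, w i + (d - ∑ i, w i) * exp t := by positivity
  constructor
  · intro i
    have win_nonneg : 0 ≤ w i * (1 - exp t) :=
      mul_nonneg (hw i).1 (sub_nonneg.2 (exp_le_one_iff.2 ht))
    have lose_nonneg : 0 ≤ (1 - w i) * (d * exp t / (d - ∑ j, w j)) :=
      mul_nonneg (sub_nonneg.2 (hw i).2) (by positivity)
    exact div_nonneg (add_nonneg win_nonneg lose_nonneg) norm_pos.le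
  · simp only [optimalInput, ← sum_div, sum_add_distrib, ← sum_mul, sum_one_sub]
    rw [mul_div_cancel₀ _ gap_pos.ne', div_eq_one_iff_eq norm_pos.ne']
    ring

lemma sum_one_sub_mul_optimalInput (hw : ∀ i, w i = 0 ∨ w i = 1) (hlt : ∑ i, w i < d) :
    ∑ i, (1 - w i) * optimalInput w t i = d * exp t / (∑ i, w i + (d - ∑ i, w i) * exp t) := by
  have term_eq (i : Fin d) : (1 - w i) * optimalInput w t i =
      (1 - w i) * (d * exp t / (d - ∑ j, w j) / (∑ j, w j + (d - ∑ j, w j) * exp t)) := by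
    rcases hw i with h | h <;> simp [h, optimalInput]
  simp only [term_eq, ← sum_mul, sum_one_sub]
  rw [← mul_div_assoc, mul_div_cancel₀ _ (sub_pos.2 hlt).ne']

lemma Wbar_optimalInput (hw : ∀ i, w i = 0 ∨ w i = 1) (hlt : ∑ i, w i < d) :
    Wbar w (optimalInput w t) = softmax (fun i ↦ (1 - w i) * t) := by
  ext i
  have hd : (d : ℝ) ≠ 0 := Nat.cast_ne_zero.2 i.pos.ne'
  rw [Wbar, sum_one_sub_mul_optimalInput hw hlt, softmax, sum_exp_one_sub_mul_of_binary hw,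
    div_right_comm, mul_div_cancel_left₀ _ hd]
  rcases hw i with h | h
  · simp [h]
  · simp [h, optimalInput, ← add_div]

lemma isGreatest_mutInfo_of_binary (hw : ∀ i, w i = 0 ∨ w i = 1) (hlt : ∑ i, w i < d) :
    IsGreatest {y | ∃ p : Fin d → ℝ, inSimplex p ∧ y = mutInfo w p}
      (log (∑ i, w i + (d - ∑ i, w i) * (d : ℝ) ^ (-d / (d - ∑ i, w i)))) := by
  have hw_Icc := mem_Icc_of_binary hw
  have d_pos : (0 : ℝ) < d := (sum_nonneg fun i _ ↦ (hw_Icc i).1).trans_lt hlt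
  have gap_pos : 0 < d - ∑ i, w i := sub_pos.2 hlt
  set t : ℝ := log d * (-d / (d - ∑ i, w i)) with ht_def
  have ht : (d - ∑ i, w i) * t = -d * log d := by
    rw [ht_def]
    field_simp
  have ht_nonpos : t ≤ 0 :=
    mul_nonpos_of_nonneg_of_nonpos (log_natCast_nonneg d)
      (div_nonpos_of_nonpos_of_nonneg (neg_nonpos.2 d_pos.le) gap_pos.le)
  rw [rpow_def_of_pos d_pos, ← ht_def, ← sum_exp_one_sub_mul_of_binary hw]
  exact (isDualPotential_of_binary hw ht).isGreatest_mutInfo hw_Icc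
    (inSimplex_optimalInput hw_Icc hlt ht_nonpos) (Wbar_optimalInput hw hlt)

end BinaryChannel

theorem stmt0 (d : ℕ) (hd : 2 ≤ d) (w : Fin d → ℝ)
    (hw : ∀ i, w i = 0 ∨ w i = 1)
    (K : ℕ) (hK : K = (Finset.univ.filter (fun i => w i = 1)).card) :
    sSup {y | ∃ p : Fin d → ℝ, inSimplex p ∧ y = mutInfo w p} =
      if K = 0 then 0
      else if K = d then Real.log d
      else Real.log ((K : ℝ) + ((d : ℝ) - K) * (d : ℝ) ^ (-(d : ℝ) / ((d : ℝ) - K))) := by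
  have hd0 : d ≠ 0 := by omega
  rcases (hK.trans_le (card_finset_fin_le _)).eq_or_lt with hKd | hKd
  · have hw_one : w = 1 := by
      ext i
      exact card_filter_eq_iff.1 (hK.symm.trans (hKd.trans (card_fin d).symm)) i (mem_univ i)
    rw [hw_one, (isGreatest_mutInfo_one hd0).csSup_eq, if_neg (hKd.trans_ne hd0), if_pos hKd]
  · have sum_w : ∑ i, w i = K := hK ▸ sum_eq_card_filter_of_binary hw
    have hlt : ∑ i, w i < d := by
      rw [sum_w]
      exact_mod_cast hKd
    rw [(isGreatest_mutInfo_of_binary hw hlt).csSup_eq, sum_w, if_neg hKd.ne]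
    split_ifs with hK0
    · simp [hK0, hd0, rpow_neg_one]
    · rfl
end

section
/- Let d ≥ 2 be an integer and ω ∈ [0,1]. Then for every w ∈ (0,1]^d with all entries strictly positive satisfying (1/d)·Σ_{i=1}^d w_i ≤ ω, one has ℐ*(w) ≤ ln(d − 1 + d^{−(1−ω)d}). -/
/-- The effective winning probability w_eff = (Σ_i 1/w_i)⁻¹. -/
noncomputable def weff {d : ℕ} (w : Fin d → ℝ) : ℝ := (∑ i, (w i)⁻¹)⁻¹

/-- ℐ*(w) = ln(Σ_j exp[d·w_eff·ln d·(1 − 1/w_j)]). -/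
noncomputable def Istar {d : ℕ} (w : Fin d → ℝ) : ℝ :=
  Real.log (∑ j, Real.exp ((d : ℝ) * weff w * Real.log d * (1 - (w j)⁻¹)))

/-!
Each summand of `exp (ℐ*(w))` lies in `[0, 1]`, so Weierstrass' inequality `∑ aⱼ ≤ d - 1 + ∏ aⱼ`
applies. The normalisation `w_eff · ∑ 1/wⱼ = 1` collapses the product of the summands to
`d ^ (-(1 - d · w_eff) d)`, and `d · w_eff`, the harmonic mean of `w`, is at most its arithmetic
mean, hence at most `ω`.
-/

theorem sum_le_card_sub_one_add_prod {ι R : Type*} [CommRing R] [PartialOrder R] [IsOrderedRing R]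
    (s : Finset ι) {a : ι → R} (ha₀ : ∀ i ∈ s, 0 ≤ a i) (ha₁ : ∀ i ∈ s, a i ≤ 1) :
    ∑ i ∈ s, a i ≤ s.card - 1 + ∏ i ∈ s, a i := by
  induction s using Finset.cons_induction with
  | empty => simp
  | cons i s hi ih =>
    simp only [Finset.forall_mem_cons] at ha₀ ha₁
    have prod_le_one : ∏ j ∈ s, a j ≤ 1 := Finset.prod_le_one ha₀.2 ha₁.2
    have add_le_one_add_mul : a i + ∏ j ∈ s, a j ≤ 1 + a i * ∏ j ∈ s, a j := by
      have := mul_nonneg (sub_nonneg.2 ha₁.1) (sub_nonneg.2 prod_le_one)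
      rw [← sub_nonneg]
      convert this using 1
      ring
    rw [Finset.sum_cons, Finset.prod_cons, Finset.card_cons, Nat.cast_succ, add_sub_cancel_right]
    calc a i + ∑ j ∈ s, a j
        ≤ a i + (s.card - 1 + ∏ j ∈ s, a j) := by gcongr; exact ih ha₀.2 ha₁.2
      _ = s.card - 1 + (a i + ∏ j ∈ s, a j) := by ring
      _ ≤ s.card - 1 + (1 + a i * ∏ j ∈ s, a j) := by gcongr
      _ = s.card + a i * ∏ j ∈ s, a j := by ring

theorem exp_mul_one_sub_inv_le_one {c x : ℝ} (hc : 0 ≤ c) (hx₀ : 0 < x) (hx₁ : x ≤ 1) :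
    Real.exp (c * (1 - x⁻¹)) ≤ 1 :=
  Real.exp_le_one_iff.2 <|
    mul_nonpos_of_nonneg_of_nonpos hc (sub_nonpos.2 ((one_le_inv₀ hx₀).2 hx₁))

section

variable {d : ℕ} {w : Fin d → ℝ}

theorem weff_nonneg (hw : ∀ i, 0 ≤ w i) : 0 ≤ weff w :=
  inv_nonneg.2 (Finset.sum_nonneg fun i _ ↦ inv_nonneg.2 (hw i))

theorem weff_mul_sum_inv [NeZero d] (hw : ∀ i, 0 < w i) : weff w * ∑ i, (w i)⁻¹ = 1 :=
  inv_mul_cancel₀ (Finset.sum_pos (fun i _ ↦ inv_pos.2 (hw i)) Finset.univ_nonempty).ne'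

theorem mul_weff_le_mean (hw : ∀ i, 0 < w i) : d * weff w ≤ 1 / d * ∑ i, w i := by
  have sq_mul_weff_le_sum : (d : ℝ) ^ 2 * weff w ≤ ∑ i, w i := by
    simpa [weff, div_eq_mul_inv] using
      Finset.sq_sum_div_le_sum_sq_div Finset.univ (fun _ ↦ (1 : ℝ)) fun i _ ↦ inv_pos.2 (hw i)
  calc d * weff w = 1 / d * (d ^ 2 * weff w) := by field
    _ ≤ 1 / d * ∑ i, w i := by gcongr

theorem prod_exp_mul_one_sub_inv [NeZero d] (hw : ∀ i, 0 < w i) :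
    ∏ j, Real.exp (d * weff w * Real.log d * (1 - (w j)⁻¹)) =
      (d : ℝ) ^ (-(1 - d * weff w) * d) := by
  have hd : (0 : ℝ) < d := Nat.cast_pos.2 (NeZero.pos d)
  have sum_one_sub_inv : ∑ j, (1 - (w j)⁻¹) = d - ∑ j, (w j)⁻¹ := by simp
  rw [← Real.exp_sum, ← Finset.mul_sum, sum_one_sub_inv, Real.rpow_def_of_pos hd]
  congr 1
  linear_combination -(d * Real.log d) * weff_mul_sum_inv hw

theorem Istar_le_log_rpow_weff [NeZero d] (hw₀ : ∀ i, 0 < w i) (hw₁ : ∀ i, w i ≤ 1) :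
    Istar w ≤ Real.log (d - 1 + (d : ℝ) ^ (-(1 - d * weff w) * d)) := by
  have coeff_nonneg : 0 ≤ d * weff w * Real.log d :=
    mul_nonneg (mul_nonneg d.cast_nonneg (weff_nonneg fun i ↦ (hw₀ i).le))
      (Real.log_natCast_nonneg d)
  apply Real.log_le_log (Finset.sum_pos (fun j _ ↦ Real.exp_pos _) Finset.univ_nonempty)
  simpa only [prod_exp_mul_one_sub_inv hw₀, Finset.card_fin] using
    sum_le_card_sub_one_add_prod Finset.univ (fun j _ ↦ (Real.exp_pos _).le)
      fun j _ ↦ exp_mul_one_sub_inv_le_one coeff_nonneg (hw₀ j) (hw₁ j)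

end

theorem stmt3 (d : ℕ) (hd : 2 ≤ d) (ω : ℝ) (hω : ω ∈ Set.Icc (0 : ℝ) 1)
    (w : Fin d → ℝ) (hw : ∀ i, 0 < w i ∧ w i ≤ 1)
    (hsum : (1 / (d : ℝ)) * ∑ i, w i ≤ ω) :
    Istar w ≤ Real.log ((d : ℝ) - 1 + (d : ℝ) ^ (-(1 - ω) * (d : ℝ))) := by
  have : NeZero d := ⟨by lia⟩
  have one_le_d : (1 : ℝ) ≤ d := Nat.one_le_cast.2 (by lia)
  have mul_weff_le : d * weff w ≤ ω := (mul_weff_le_mean fun i ↦ (hw i).1).trans hsum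
  calc Istar w ≤ Real.log (d - 1 + (d : ℝ) ^ (-(1 - d * weff w) * d)) :=
        Istar_le_log_rpow_weff (fun i ↦ (hw i).1) fun i ↦ (hw i).2
    _ ≤ Real.log (d - 1 + (d : ℝ) ^ (-(1 - ω) * d)) := by
        have : 0 ≤ (d : ℝ) - 1 := sub_nonneg.2 one_le_d
        gcongr
end

section
/- Let N be a two-sender multiple access channel with input alphabet sizes d₁, d₂ ≥ 2 and output alphabet size d_o ≥ 2. Then for every p ∈ Δ_{d₁} and all q, q' ∈ Δ_{d₂}, |I(p,q) − I(p,q')| ≤ β_I(‖q − q'‖₁); consequently, defining I*(q) = sup_{p ∈ Δ_{d₁}} I(p,q), one also has |I*(q) − I*(q')| ≤ β_I(‖q − q'‖₁) for all q, q' ∈ Δ_{d₂}. -/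
/-- The modified binary entropy h̄ (in nats), with 0·ln 0 := 0. -/
noncomputable def hbar (x : ℝ) : ℝ :=
  if x ≤ 1 / 2 then Real.negMulLog x + Real.negMulLog (1 - x) else Real.log 2

/-- The mutual information I(p,q) = H(A_q p) − ⟨b_q, p⟩ for a two-sender MAC N, in nats. -/
noncomputable def mutualInfoMAC {d1 d2 dO : ℕ}
    (N : Fin dO → Fin d1 → Fin d2 → ℝ) (p : Fin d1 → ℝ) (q : Fin d2 → ℝ) : ℝ :=
  (∑ z, Real.negMulLog (∑ b1, (∑ b2, N z b1 b2 * q b2) * p b1)) -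
    ∑ b1, (∑ b2, q b2 * ∑ z, Real.negMulLog (N z b1 b2)) * p b1

/-- H^max_N: the maximum output entropy over input letter pairs. -/
noncomputable def HmaxN {d1 d2 dO : ℕ} (N : Fin dO → Fin d1 → Fin d2 → ℝ) : ℝ :=
  ⨆ b1 : Fin d1, ⨆ b2 : Fin d2, ∑ z, Real.negMulLog (N z b1 b2)

/-- The continuity modulus β_I(x) = ((1/2)·ln(d_o − 1) + H^max_N)·x + h̄(x/2). -/
noncomputable def betaI {d1 d2 dO : ℕ} (N : Fin dO → Fin d1 → Fin d2 → ℝ) (x : ℝ) : ℝ :=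
  ((1 / 2) * Real.log ((dO : ℝ) - 1) + HmaxN N) * x + hbar (x / 2)

/-!
The channel seen by the second sender, once the first one uses the input law `p`, is a stochastic
matrix `W`, and `I(p, q) = H(W q) - ⟨c, q⟩` where `0 ≤ c ≤ H^max`. The linear term is
`H^max`-Lipschitz for the `ℓ¹`-norm. For the entropy term, `W` contracts the `ℓ¹`-norm, so what is
needed is the Fannes–Audenaert bound `|H(r) - H(s)| ≤ t log (d - 1) + h(t)` in terms of the total
variation distance `t`. It follows from Fano's inequality: if `X ∼ r` and `Y ∼ s` are coupled so
that `P(X ≠ Y) = t`, then `H(X) - H(Y) ≤ H(X | Y) ≤ t log (d - 1) + h(t)`. Fano's inequality in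
turn is Gibbs' inequality against the law obtained from `s` by sending `y` to itself with
probability `1 - t` and to every other letter with probability `t / (d - 1)`.
-/

open Real Finset Matrix

section Entropy

variable {ι : Type*} [Fintype ι]

/-- Shannon entropy, in nats, of a vector of weights on a finite alphabet; the weights need not be
normalized. -/
noncomputable def shannonEntropy (r : ι → ℝ) : ℝ :=
  ∑ i, negMulLog (r i)

lemma shannonEntropy_nonneg {r : ι → ℝ} (hr : r ∈ stdSimplex ℝ ι) : 0 ≤ shannonEntropy r :=
  sum_nonneg fun i _ =>
    have hi := mem_Icc_of_mem_stdSimplex hr i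
    negMulLog_nonneg hi.1 hi.2

lemma negMulLog_le_mul_neg_log_add_sub {a b : ℝ} (ha : 0 ≤ a) (hb : 0 ≤ b) (hab : b = 0 → a = 0) :
    negMulLog a ≤ a * -log b + (b - a) := by
  rcases hb.eq_or_lt with rfl | hb
  · simp [hab rfl]
  rcases ha.eq_or_lt with rfl | ha
  · simpa using hb.le
  calc negMulLog a = a * -log b + b * negMulLog (a / b) := by
        rw [negMulLog, negMulLog, log_div ha.ne' hb.ne']; field_simp; ring
    _ ≤ a * -log b + b * (1 - a / b) := by
        gcongr; exact negMulLog_le_one_sub_self (by positivity)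
    _ = a * -log b + (b - a) := by field_simp

theorem gibbs_inequality {a b : ι → ℝ} (ha : ∀ i, 0 ≤ a i) (hb : ∀ i, 0 ≤ b i)
    (hab : ∀ i, b i = 0 → a i = 0) (hsum : ∑ i, b i ≤ ∑ i, a i) :
    shannonEntropy a ≤ ∑ i, a i * -log (b i) :=
  calc shannonEntropy a ≤ ∑ i, (a i * -log (b i) + (b i - a i)) :=
        sum_le_sum fun i _ => negMulLog_le_mul_neg_log_add_sub (ha i) (hb i) (hab i)
    _ = ∑ i, a i * -log (b i) + (∑ i, b i - ∑ i, a i) := by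
        rw [sum_add_distrib, sum_sub_distrib]
    _ ≤ ∑ i, a i * -log (b i) := by linarith

lemma negMulLog_sum_le {a : ι → ℝ} (ha : ∀ i, 0 ≤ a i) :
    negMulLog (∑ i, a i) ≤ ∑ i, negMulLog (a i) := by
  rw [negMulLog, neg_mul, sum_mul, ← sum_neg_distrib]
  refine sum_le_sum fun i _ => ?_
  rw [negMulLog, neg_mul, neg_le_neg_iff]
  rcases (ha i).eq_or_lt with hi | hi
  · simp [← hi]
  · have hle : a i ≤ ∑ j, a j := single_le_sum (fun j _ => ha j) (mem_univ i)
    gcongr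

end Entropy

section Coupling

variable {α β : Type*} [Fintype α] [Fintype β] {r : α → ℝ} {s : β → ℝ} {P : α × β → ℝ}

/-- `P` is a nonnegative weight on `α × β` with marginals `r` and `s`, i.e. a joint law of a pair
`(X, Y)` with `X ∼ r` and `Y ∼ s`. -/
structure IsCoupling (P : α × β → ℝ) (r : α → ℝ) (s : β → ℝ) : Prop where
  nonneg : ∀ i, 0 ≤ P i
  sum_snd : ∀ x, ∑ y, P (x, y) = r x
  sum_fst : ∀ y, ∑ x, P (x, y) = s y

namespace IsCoupling

lemma le_snd (h : IsCoupling P r s) (x : α) (y : β) : P (x, y) ≤ s y :=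
  h.sum_fst y ▸ single_le_sum (f := fun x => P (x, y)) (fun _ _ => h.nonneg _) (mem_univ x)

lemma snd_nonneg (h : IsCoupling P r s) (y : β) : 0 ≤ s y :=
  h.sum_fst y ▸ sum_nonneg fun _ _ => h.nonneg _

lemma sum_eq_sum_fst (h : IsCoupling P r s) : ∑ i, P i = ∑ x, r x := by
  simp only [Fintype.sum_prod_type, h.sum_snd]

lemma sum_mul_snd (h : IsCoupling P r s) (f : β → ℝ) :
    ∑ i, P i * f i.2 = ∑ y, s y * f y := by
  simp only [Fintype.sum_prod_type_right, ← sum_mul, h.sum_fst]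

lemma shannonEntropy_fst_le (h : IsCoupling P r s) : shannonEntropy r ≤ shannonEntropy P := by
  rw [shannonEntropy, shannonEntropy, Fintype.sum_prod_type]
  refine sum_le_sum fun x _ => ?_
  rw [← h.sum_snd x]
  exact negMulLog_sum_le fun y => h.nonneg (x, y)

theorem shannonEntropy_sub_le_sum_mul_neg_log (h : IsCoupling P r s) {Q : α × β → ℝ}
    (hQ : ∀ i, 0 ≤ Q i) (hQ_sum : ∀ y, ∑ x, Q (x, y) = 1) (hPQ : ∀ i, Q i = 0 → P i = 0) :
    shannonEntropy r - shannonEntropy s ≤ ∑ i, P i * -log (Q i) := by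
  have hP_of_snd : ∀ i, s i.2 = 0 → P i = 0 := fun i hi =>
    le_antisymm (hi ▸ h.le_snd i.1 i.2) (h.nonneg i)
  have hgibbs : shannonEntropy P ≤ ∑ i, P i * -log (s i.2 * Q i) := by
    refine gibbs_inequality h.nonneg (fun i => mul_nonneg (h.snd_nonneg _) (hQ i))
      (fun i hi => (mul_eq_zero.mp hi).elim (hP_of_snd i) (hPQ i)) (le_of_eq ?_)
    simp only [Fintype.sum_prod_type_right, ← mul_sum, hQ_sum, h.sum_fst, mul_one]
  have hlog : ∀ i, P i * -log (s i.2 * Q i) = P i * -log (s i.2) + P i * -log (Q i) := by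
    intro i
    by_cases hi : P i = 0
    · simp [hi]
    · rw [log_mul (mt (hP_of_snd i) hi) (mt (hPQ i) hi)]; ring
  have hsnd : ∑ i, P i * -log (s i.2) = shannonEntropy s := by
    rw [h.sum_mul_snd fun y => -log (s y)]
    simp only [shannonEntropy, negMulLog, neg_mul, mul_neg]
  rw [sum_congr rfl fun i _ => hlog i, sum_add_distrib, hsnd] at hgibbs
  linarith [h.shannonEntropy_fst_le]

end IsCoupling

end Coupling

section Fano

lemma qaryEntropy_eq_mul_neg_log_add {q : ℕ} (hq : 2 ≤ q) (e : ℝ) :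
    qaryEntropy q e = (1 - e) * -log (1 - e) + e * -log (e / (q - 1)) := by
  have hq' : (2 : ℝ) ≤ q := mod_cast hq
  rw [qaryEntropy, binEntropy, log_inv, log_inv]
  push_cast
  by_cases he : e = 0
  · simp [he]
  · rw [log_div he (by linarith)]
    ring

variable {α : Type*} [Fintype α] {r s : α → ℝ} {P : α × α → ℝ}

lemma card_sub_one_pos [Nontrivial α] : (0 : ℝ) < Fintype.card α - 1 :=
  sub_pos.mpr (mod_cast Fintype.one_lt_card)

lemma IsCoupling.sum_diag_mem_Icc (h : IsCoupling P r s) (hr : ∑ x, r x = 1) :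
    ∑ x, P (x, x) ∈ Set.Icc 0 1 := by
  refine ⟨sum_nonneg fun x _ => h.nonneg _, hr ▸ sum_le_sum fun x _ => ?_⟩
  rw [← h.sum_snd x]
  exact single_le_sum (f := fun y => P (x, y)) (fun y _ => h.nonneg _) (mem_univ x)

variable [DecidableEq α]

/-- The `α`-ary symmetric channel with error probability `e`: the probability of `i.1` given `i.2`,
every wrong letter being equally likely. -/
noncomputable def symmetricChannel (e : ℝ) (i : α × α) : ℝ :=
  if i.1 = i.2 then 1 - e else e / (Fintype.card α - 1)

lemma symmetricChannel_nonneg [Nontrivial α] {e : ℝ} (he : e ∈ Set.Icc 0 1) (i : α × α) :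
    0 ≤ symmetricChannel e i := by
  rw [symmetricChannel]
  split_ifs
  · exact sub_nonneg.mpr he.2
  · exact div_nonneg he.1 card_sub_one_pos.le

lemma neg_log_symmetricChannel (e : ℝ) (i : α × α) :
    -log (symmetricChannel e i) =
      if i.1 = i.2 then -log (1 - e) else -log (e / (Fintype.card α - 1)) :=
  apply_ite (fun v => -log v) _ _ _

lemma sum_symmetricChannel [Nontrivial α] (e : ℝ) (y : α) :
    ∑ x, symmetricChannel e (x, y) = 1 := by
  have hcard : (Fintype.card α : ℝ) - 1 ≠ 0 := card_sub_one_pos.ne'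
  simp only [symmetricChannel]
  rw [← add_sum_erase _ _ (mem_univ y), if_pos rfl,
    sum_congr rfl fun x hx => if_neg (ne_of_mem_erase hx), sum_const,
    card_erase_of_mem (mem_univ y), card_univ, nsmul_eq_mul, Nat.cast_pred Fintype.card_pos]
  field_simp
  ring

namespace IsCoupling

lemma sum_mul_ite_eq (h : IsCoupling P r s) (a b : ℝ) :
    ∑ i, P i * (if i.1 = i.2 then a else b) =
      (∑ x, P (x, x)) * a + (∑ x, r x - ∑ x, P (x, x)) * b := by
  have hsplit : ∀ i, P i * (if i.1 = i.2 then a else b) =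
      P i * b + if i.1 = i.2 then P i * (a - b) else 0 := by
    intro i; split_ifs <;> ring
  simp only [hsplit, sum_add_distrib, ← sum_mul, h.sum_eq_sum_fst]
  simp only [Fintype.sum_prod_type, sum_ite_eq, mem_univ, if_true, ← sum_mul]
  ring

lemma eq_zero_of_symmetricChannel_eq_zero [Nontrivial α] (h : IsCoupling P r s)
    (hr : ∑ x, r x = 1) (i : α × α) (hi : symmetricChannel (1 - ∑ x, P (x, x)) i = 0) :
    P i = 0 := by
  obtain ⟨x, y⟩ := i
  rw [symmetricChannel] at hi
  split_ifs at hi with hxy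
  · obtain rfl : x = y := hxy
    have hdiag : ∑ x, P (x, x) = 0 := by linarith
    exact (sum_eq_zero_iff_of_nonneg fun x _ => h.nonneg (x, x)).mp hdiag x (mem_univ x)
  · have herr : 1 - ∑ x, P (x, x) = 0 := (div_eq_zero_iff.mp hi).resolve_right card_sub_one_pos.ne'
    have hoff : ∑ i, P i * (if i.1 = i.2 then 0 else 1) = 0 := by
      rw [h.sum_mul_ite_eq, hr, herr, mul_zero, zero_mul, add_zero]
    have hterm := (sum_eq_zero_iff_of_nonneg fun i _ =>
      mul_nonneg (h.nonneg i) (by split_ifs <;> norm_num)).mp hoff (x, y) (mem_univ _)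
    rwa [if_neg hxy, mul_one] at hterm

end IsCoupling

end Fano

theorem IsCoupling.fano_inequality {α : Type*} [Fintype α] [Nontrivial α] {r s : α → ℝ}
    {P : α × α → ℝ} (h : IsCoupling P r s) (hr : ∑ x, r x = 1) :
    shannonEntropy r - shannonEntropy s ≤
      qaryEntropy (Fintype.card α) (1 - ∑ x, P (x, x)) := by
  classical
  set e := 1 - ∑ x, P (x, x) with he
  have he_mem : e ∈ Set.Icc 0 1 := by
    obtain ⟨h0, h1⟩ := h.sum_diag_mem_Icc hr
    exact ⟨sub_nonneg.mpr h1, sub_le_self _ h0⟩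
  calc shannonEntropy r - shannonEntropy s
      ≤ ∑ i, P i * -log (symmetricChannel e i) :=
        h.shannonEntropy_sub_le_sum_mul_neg_log (symmetricChannel_nonneg he_mem)
          (sum_symmetricChannel e) (h.eq_zero_of_symmetricChannel_eq_zero hr)
    _ = (1 - e) * -log (1 - e) + e * -log (e / (Fintype.card α - 1)) := by
        simp only [neg_log_symmetricChannel]
        rw [h.sum_mul_ite_eq, hr, he, sub_sub_cancel]
    _ = qaryEntropy (Fintype.card α) e :=
        (qaryEntropy_eq_mul_neg_log_add Fintype.one_lt_card e).symm

section FannesAudenaert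

variable {α : Type*} [Fintype α] {r s : α → ℝ}

/-- Total variation distance of two weights on a finite alphabet: half their `ℓ¹`-distance. -/
noncomputable def tvDist (r s : α → ℝ) : ℝ :=
  (∑ x, |r x - s x|) / 2

lemma tvDist_nonneg (r s : α → ℝ) : 0 ≤ tvDist r s := by
  unfold tvDist; positivity

lemma tvDist_comm (r s : α → ℝ) : tvDist r s = tvDist s r := by
  simp only [tvDist, abs_sub_comm]

lemma eq_of_tvDist_eq_zero (h : tvDist r s = 0) : r = s := by
  have hsum : ∑ x, |r x - s x| = 0 := by rw [tvDist] at h; linarith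
  funext x
  exact sub_eq_zero.mp <| abs_eq_zero.mp <|
    (sum_eq_zero_iff_of_nonneg fun x _ => abs_nonneg (r x - s x)).mp hsum x (mem_univ x)

lemma sum_sub_min_eq_tvDist (h : ∑ x, r x = ∑ x, s x) :
    ∑ x, (r x - min (r x) (s x)) = tvDist r s := by
  have hmin : ∀ x, r x - min (r x) (s x) = (|r x - s x| + (r x - s x)) / 2 := by
    intro x
    rcases le_total (r x) (s x) with hx | hx
    · rw [min_eq_left hx, abs_of_nonpos (sub_nonpos.mpr hx)]; ring
    · rw [min_eq_right hx, abs_of_nonneg (sub_nonneg.mpr hx)]; ring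
  simp only [hmin, ← sum_div, sum_add_distrib, sum_sub_distrib, h, sub_self, add_zero, tvDist]

variable [DecidableEq α]

/-- The coupling of `r` and `s` that maximizes the weight of the diagonal: the common part
`min r s` is left in place, and the two excess parts, which have disjoint supports and the same
mass `tvDist r s`, are coupled independently. If that mass is zero, so are the excess parts, and
division by zero yields the intended value `0`. -/
noncomputable def maximalCoupling (r s : α → ℝ) (i : α × α) : ℝ :=
  (if i.1 = i.2 then min (r i.1) (s i.1) else 0) +
    (r i.1 - min (r i.1) (s i.1)) * (s i.2 - min (r i.2) (s i.2)) / tvDist r s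

lemma maximalCoupling_diag (r s : α → ℝ) (x : α) :
    maximalCoupling r s (x, x) = min (r x) (s x) := by
  rcases le_total (r x) (s x) with hx | hx <;> simp [maximalCoupling, hx]

lemma maximalCoupling_swap (r s : α → ℝ) (x y : α) :
    maximalCoupling r s (x, y) = maximalCoupling s r (y, x) := by
  rcases eq_or_ne x y with rfl | hxy
  · rw [maximalCoupling_diag, maximalCoupling_diag, min_comm]
  · simp only [maximalCoupling, if_neg hxy, if_neg hxy.symm, tvDist_comm s r, min_comm (s _) (r _),
      mul_comm]

lemma sum_maximalCoupling_snd (h : ∑ x, r x = ∑ x, s x) (x : α) :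
    ∑ y, maximalCoupling r s (x, y) = r x := by
  have hexcess : ∑ y, (s y - min (r y) (s y)) = tvDist r s := by
    simpa only [min_comm, tvDist_comm] using sum_sub_min_eq_tvDist h.symm
  have hzero : tvDist r s = 0 → r x - min (r x) (s x) = 0 := fun ht => by
    simp [eq_of_tvDist_eq_zero ht]
  simp only [maximalCoupling, sum_add_distrib, sum_ite_eq, mem_univ, if_true, ← sum_div, ← mul_sum,
    hexcess]
  rw [mul_div_cancel_of_imp hzero, add_sub_cancel]

lemma isCoupling_maximalCoupling (hr : ∀ x, 0 ≤ r x) (hs : ∀ x, 0 ≤ s x)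
    (h : ∑ x, r x = ∑ x, s x) : IsCoupling (maximalCoupling r s) r s where
  nonneg i := by
    have hmin : 0 ≤ min (r i.1) (s i.1) := le_min (hr _) (hs _)
    have hexcess : 0 ≤ (r i.1 - min (r i.1) (s i.1)) * (s i.2 - min (r i.2) (s i.2)) / tvDist r s :=
      div_nonneg (mul_nonneg (sub_nonneg.mpr (min_le_left _ _)) (sub_nonneg.mpr (min_le_right _ _)))
        (tvDist_nonneg r s)
    rw [maximalCoupling]
    split_ifs <;> positivity
  sum_snd := sum_maximalCoupling_snd h
  sum_fst y := by
    simpa only [maximalCoupling_swap r s] using sum_maximalCoupling_snd h.symm y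

end FannesAudenaert

theorem shannonEntropy_sub_le_qaryEntropy_tvDist {α : Type*} [Fintype α] [Nontrivial α]
    {r s : α → ℝ} (hr : r ∈ stdSimplex ℝ α) (hs : s ∈ stdSimplex ℝ α) :
    shannonEntropy r - shannonEntropy s ≤ qaryEntropy (Fintype.card α) (tvDist r s) := by
  classical
  have hsum : ∑ x, r x = ∑ x, s x := hr.2.trans hs.2.symm
  have herr : 1 - ∑ x, maximalCoupling r s (x, x) = tvDist r s := by
    simp only [maximalCoupling_diag, ← sum_sub_min_eq_tvDist hsum, sum_sub_distrib, hr.2]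
  exact herr ▸ (isCoupling_maximalCoupling hr.1 hs.1 hsum).fano_inequality hr.2

theorem abs_shannonEntropy_sub_le_qaryEntropy_tvDist {α : Type*} [Fintype α] [Nontrivial α]
    {r s : α → ℝ} (hr : r ∈ stdSimplex ℝ α) (hs : s ∈ stdSimplex ℝ α) :
    |shannonEntropy r - shannonEntropy s| ≤ qaryEntropy (Fintype.card α) (tvDist r s) :=
  abs_sub_le_iff.mpr ⟨shannonEntropy_sub_le_qaryEntropy_tvDist hr hs,
    tvDist_comm s r ▸ shannonEntropy_sub_le_qaryEntropy_tvDist hs hr⟩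

section ModifiedBinaryEntropy

lemma hbar_eq_binEntropy_min (x : ℝ) : hbar x = binEntropy (min x 2⁻¹) := by
  rw [hbar, one_div]
  split_ifs with hx
  · rw [min_eq_left hx, binEntropy_eq_negMulLog_add_negMulLog_one_sub]
  · rw [min_eq_right (not_le.mp hx).le, binEntropy_two_inv]

lemma binEntropy_le_hbar (x : ℝ) : binEntropy x ≤ hbar x := by
  rw [hbar_eq_binEntropy_min]
  rcases le_total x 2⁻¹ with hx | hx
  · rw [min_eq_left hx]
  · rw [min_eq_right hx, binEntropy_two_inv]
    exact binEntropy_le_log_two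

lemma hbar_monotoneOn : MonotoneOn hbar (Set.Ici 0) := by
  intro x hx y hy hxy
  rw [hbar_eq_binEntropy_min, hbar_eq_binEntropy_min]
  exact binEntropy_strictMonoOn.monotoneOn
    ⟨le_min hx (by norm_num), min_le_right _ _⟩ ⟨le_min hy (by norm_num), min_le_right _ _⟩
    (min_le_min_right _ hxy)

lemma qaryEntropy_le_mul_log_add_hbar {d : ℕ} (hd : 2 ≤ d) {t T : ℝ} (ht : 0 ≤ t) (htT : t ≤ T) :
    qaryEntropy d t ≤ T * log (d - 1) + hbar T := by
  have hd' : (2 : ℝ) ≤ d := mod_cast hd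
  have hlog : 0 ≤ log ((d : ℝ) - 1) := log_nonneg (by linarith)
  have hhbar : binEntropy t ≤ hbar T :=
    (binEntropy_le_hbar t).trans (hbar_monotoneOn ht (ht.trans htT) htT)
  rw [qaryEntropy]
  push_cast
  gcongr

end ModifiedBinaryEntropy

section StochasticMatrix

variable {β γ : Type*} [Fintype β] [Fintype γ] {W : Matrix γ β ℝ}

lemma mulVec_mem_stdSimplex (hW : ∀ b, W.col b ∈ stdSimplex ℝ γ) {q : β → ℝ}
    (hq : q ∈ stdSimplex ℝ β) : W *ᵥ q ∈ stdSimplex ℝ γ := by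
  have hcomb : W *ᵥ q = ∑ b, q b • W.col b := by
    ext z
    simp [mulVec, dotProduct, mul_comm]
  rw [hcomb]
  exact (convex_stdSimplex ℝ γ).sum_mem (fun b _ => hq.1 b) hq.2 fun b _ => hW b

lemma sum_abs_mulVec_le (hW : ∀ b, W.col b ∈ stdSimplex ℝ γ) (v : β → ℝ) :
    ∑ z, |(W *ᵥ v) z| ≤ ∑ b, |v b| :=
  calc ∑ z, |(W *ᵥ v) z| ≤ ∑ z, ∑ b, W z b * |v b| := by
        gcongr with z
        refine (abs_sum_le_sum_abs _ _).trans_eq (sum_congr rfl fun b _ => ?_)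
        have hnonneg : 0 ≤ W z b := (hW b).1 z
        simp only [abs_mul, abs_of_nonneg hnonneg]
    _ = ∑ b, |v b| := by
        rw [sum_comm]
        refine sum_congr rfl fun b _ => ?_
        have hsum : ∑ z, W z b = 1 := (hW b).2
        rw [← sum_mul, hsum, one_mul]

lemma tvDist_mulVec_le (hW : ∀ b, W.col b ∈ stdSimplex ℝ γ) (q q' : β → ℝ) :
    tvDist (W *ᵥ q) (W *ᵥ q') ≤ tvDist q q' := by
  have hcontr := sum_abs_mulVec_le hW (q - q')
  rw [mulVec_sub] at hcontr
  exact div_le_div_of_nonneg_right hcontr zero_le_two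

lemma abs_dotProduct_le {c : β → ℝ} {M : ℝ} (hc : ∀ b, |c b| ≤ M) (v : β → ℝ) :
    |c ⬝ᵥ v| ≤ M * ∑ b, |v b| :=
  calc |c ⬝ᵥ v| ≤ ∑ b, |c b| * |v b| := by
        simpa only [dotProduct, abs_mul] using abs_sum_le_sum_abs (fun b => c b * v b) univ
    _ ≤ M * ∑ b, |v b| := by
        rw [mul_sum]
        gcongr with b
        exact hc b

theorem abs_shannonEntropy_mulVec_sub_dotProduct_sub_le [Nontrivial γ]
    (hW : ∀ b, W.col b ∈ stdSimplex ℝ γ) {c : β → ℝ} {M : ℝ} (hc : ∀ b, |c b| ≤ M)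
    {q q' : β → ℝ} (hq : q ∈ stdSimplex ℝ β) (hq' : q' ∈ stdSimplex ℝ β) :
    |(shannonEntropy (W *ᵥ q) - c ⬝ᵥ q) - (shannonEntropy (W *ᵥ q') - c ⬝ᵥ q')| ≤
      tvDist q q' * log (Fintype.card γ - 1) + hbar (tvDist q q') + M * ∑ b, |q b - q' b| := by
  have hentropy : |shannonEntropy (W *ᵥ q) - shannonEntropy (W *ᵥ q')| ≤
      tvDist q q' * log (Fintype.card γ - 1) + hbar (tvDist q q') :=
    (abs_shannonEntropy_sub_le_qaryEntropy_tvDist (mulVec_mem_stdSimplex hW hq)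
      (mulVec_mem_stdSimplex hW hq')).trans
      (qaryEntropy_le_mul_log_add_hbar Fintype.one_lt_card (tvDist_nonneg _ _)
        (tvDist_mulVec_le hW q q'))
  have hlinear : |c ⬝ᵥ q - c ⬝ᵥ q'| ≤ M * ∑ b, |q b - q' b| := by
    simpa only [dotProduct_sub, Pi.sub_apply] using abs_dotProduct_le hc (q - q')
  rw [sub_sub_sub_comm]
  exact (abs_sub _ _).trans (add_le_add hentropy hlinear)

end StochasticMatrix

section MultipleAccessChannel

variable {d1 d2 dO : ℕ} {N : Fin dO → Fin d1 → Fin d2 → ℝ}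

/-- The channel from the second sender to the output when the first sender's input has law `p`. -/
def secondSenderChannel (N : Fin dO → Fin d1 → Fin d2 → ℝ) (p : Fin d1 → ℝ) :
    Matrix (Fin dO) (Fin d2) ℝ :=
  .of fun z b2 => ∑ b1, p b1 * N z b1 b2

/-- The output entropy given both input letters, averaged over the first one with law `p`; as a
function of the second letter it represents the linear functional `q ↦ ⟨b_q, p⟩`. -/
noncomputable def meanOutputEntropy (N : Fin dO → Fin d1 → Fin d2 → ℝ) (p : Fin d1 → ℝ)
    (b2 : Fin d2) : ℝ :=
  ∑ b1, p b1 * shannonEntropy fun z => N z b1 b2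

lemma mutualInfoMAC_eq_shannonEntropy_mulVec_sub_dotProduct (N : Fin dO → Fin d1 → Fin d2 → ℝ)
    (p : Fin d1 → ℝ) (q : Fin d2 → ℝ) :
    mutualInfoMAC N p q =
      shannonEntropy (secondSenderChannel N p *ᵥ q) - meanOutputEntropy N p ⬝ᵥ q := by
  have houtput : ∀ z, ∑ b1, (∑ b2, N z b1 b2 * q b2) * p b1 =
      (secondSenderChannel N p *ᵥ q) z := by
    intro z
    simp only [secondSenderChannel, mulVec, dotProduct, of_apply, sum_mul]
    rw [sum_comm]
    exact sum_congr rfl fun b2 _ => sum_congr rfl fun b1 _ => by ring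
  have hlinear : ∑ b1, (∑ b2, q b2 * ∑ z, negMulLog (N z b1 b2)) * p b1 =
      meanOutputEntropy N p ⬝ᵥ q := by
    simp only [meanOutputEntropy, shannonEntropy, dotProduct, sum_mul _ _ (q _), sum_mul _ _ (p _)]
    rw [sum_comm]
    exact sum_congr rfl fun b2 _ => sum_congr rfl fun b1 _ => by ring
  simp only [mutualInfoMAC, houtput, hlinear, shannonEntropy]

lemma shannonEntropy_le_HmaxN (N : Fin dO → Fin d1 → Fin d2 → ℝ) (b1 : Fin d1) (b2 : Fin d2) :
    shannonEntropy (fun z => N z b1 b2) ≤ HmaxN N :=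
  (le_ciSup (f := fun b2 => ∑ z, negMulLog (N z b1 b2)) (Set.finite_range _).bddAbove b2).trans
    (le_ciSup (f := fun b1 => ⨆ b2, ∑ z, negMulLog (N z b1 b2)) (Set.finite_range _).bddAbove b1)

lemma secondSenderChannel_col_mem_stdSimplex
    (hN : ∀ b1 b2, (fun z => N z b1 b2) ∈ stdSimplex ℝ (Fin dO)) {p : Fin d1 → ℝ}
    (hp : p ∈ stdSimplex ℝ (Fin d1)) (b2 : Fin d2) :
    (secondSenderChannel N p).col b2 ∈ stdSimplex ℝ (Fin dO) := by
  have hcomb : (secondSenderChannel N p).col b2 = ∑ b1, p b1 • fun z => N z b1 b2 := by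
    ext z
    simp [secondSenderChannel]
  rw [hcomb]
  exact (convex_stdSimplex ℝ _).sum_mem (fun b1 _ => hp.1 b1) hp.2 fun b1 _ => hN b1 b2

lemma abs_meanOutputEntropy_le_HmaxN
    (hN : ∀ b1 b2, (fun z => N z b1 b2) ∈ stdSimplex ℝ (Fin dO)) {p : Fin d1 → ℝ}
    (hp : p ∈ stdSimplex ℝ (Fin d1)) (b2 : Fin d2) : |meanOutputEntropy N p b2| ≤ HmaxN N := by
  have hmem : meanOutputEntropy N p b2 ∈ Set.Icc 0 (HmaxN N) :=
    (convex_Icc 0 (HmaxN N)).sum_mem (fun b1 _ => hp.1 b1) hp.2 fun b1 _ =>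
      ⟨shannonEntropy_nonneg (hN b1 b2), shannonEntropy_le_HmaxN N b1 b2⟩
  rw [abs_of_nonneg hmem.1]
  exact hmem.2

theorem abs_mutualInfoMAC_sub_le_betaI (hO : 2 ≤ dO)
    (hN : ∀ b1 b2, (fun z => N z b1 b2) ∈ stdSimplex ℝ (Fin dO)) {p : Fin d1 → ℝ}
    (hp : p ∈ stdSimplex ℝ (Fin d1)) {q q' : Fin d2 → ℝ} (hq : q ∈ stdSimplex ℝ (Fin d2))
    (hq' : q' ∈ stdSimplex ℝ (Fin d2)) :
    |mutualInfoMAC N p q - mutualInfoMAC N p q'| ≤ betaI N (∑ i, |q i - q' i|) := by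
  have : Nontrivial (Fin dO) := Fin.nontrivial_iff_two_le.mpr hO
  have hbound := abs_shannonEntropy_mulVec_sub_dotProduct_sub_le
    (secondSenderChannel_col_mem_stdSimplex hN hp) (abs_meanOutputEntropy_le_HmaxN hN hp) hq hq'
  simp only [← mutualInfoMAC_eq_shannonEntropy_mulVec_sub_dotProduct, tvDist, Fintype.card_fin]
    at hbound
  rw [betaI]
  linarith

lemma bddAbove_image_mutualInfoMAC (N : Fin dO → Fin d1 → Fin d2 → ℝ) (q : Fin d2 → ℝ) :
    BddAbove ((fun p => mutualInfoMAC N p q) '' stdSimplex ℝ (Fin d1)) := by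
  have hcont : Continuous fun p => mutualInfoMAC N p q := by
    unfold mutualInfoMAC
    fun_prop
  exact (isCompact_stdSimplex ℝ (Fin d1)).bddAbove_image hcont.continuousOn

end MultipleAccessChannel

lemma sSup_image_sub_sSup_image_le {α : Type*} {S : Set α} (hS : S.Nonempty) {f g : α → ℝ} {c : ℝ}
    (hg : BddAbove (g '' S)) (h : ∀ x ∈ S, f x - g x ≤ c) :
    sSup (f '' S) - sSup (g '' S) ≤ c := by
  rw [sub_le_iff_le_add]
  refine csSup_le (hS.image f) (Set.forall_mem_image.mpr fun x hx => ?_)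
  linarith [h x hx, le_csSup hg (Set.mem_image_of_mem g hx)]

lemma abs_sSup_image_sub_sSup_image_le {α : Type*} {S : Set α} (hS : S.Nonempty) {f g : α → ℝ}
    {c : ℝ} (hf : BddAbove (f '' S)) (hg : BddAbove (g '' S)) (h : ∀ x ∈ S, |f x - g x| ≤ c) :
    |sSup (f '' S) - sSup (g '' S)| ≤ c :=
  abs_sub_le_iff.mpr
    ⟨sSup_image_sub_sSup_image_le hS hg fun x hx => (abs_sub_le_iff.mp (h x hx)).1,
      sSup_image_sub_sSup_image_le hS hf fun x hx => (abs_sub_le_iff.mp (h x hx)).2⟩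

theorem stmt5 (d1 d2 dO : ℕ) (h1 : 2 ≤ d1) (h2 : 2 ≤ d2) (hO : 2 ≤ dO)
    (N : Fin dO → Fin d1 → Fin d2 → ℝ)
    (hNnn : ∀ z b1 b2, 0 ≤ N z b1 b2)
    (hNsum : ∀ b1 b2, ∑ z, N z b1 b2 = 1) :
    (∀ p : Fin d1 → ℝ, inSimplex p → ∀ q q' : Fin d2 → ℝ, inSimplex q → inSimplex q' →
      |mutualInfoMAC N p q - mutualInfoMAC N p q'| ≤ betaI N (∑ i, |q i - q' i|)) ∧
    (∀ q q' : Fin d2 → ℝ, inSimplex q → inSimplex q' →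
      |sSup {y | ∃ p : Fin d1 → ℝ, inSimplex p ∧ y = mutualInfoMAC N p q} -
        sSup {y | ∃ p : Fin d1 → ℝ, inSimplex p ∧ y = mutualInfoMAC N p q'}| ≤
        betaI N (∑ i, |q i - q' i|)) := by
  have hN : ∀ b1 b2, (fun z => N z b1 b2) ∈ stdSimplex ℝ (Fin dO) := fun b1 b2 =>
    ⟨fun z => hNnn z b1 b2, hNsum b1 b2⟩
  refine ⟨fun p hp q q' hq hq' => abs_mutualInfoMAC_sub_le_betaI hO hN hp hq hq',
    fun q q' hq hq' => ?_⟩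
  have himage : ∀ q, {y | ∃ p : Fin d1 → ℝ, inSimplex p ∧ y = mutualInfoMAC N p q} =
      (fun p => mutualInfoMAC N p q) '' stdSimplex ℝ (Fin d1) := fun q =>
    Set.ext fun y => exists_congr fun p => and_congr_right fun _ => eq_comm
  have hne : (stdSimplex ℝ (Fin d1)).Nonempty := ⟨_, single_mem_stdSimplex ℝ ⟨0, by omega⟩⟩
  rw [himage, himage]
  exact abs_sSup_image_sub_sSup_image_le hne (bddAbove_image_mutualInfoMAC N q)
    (bddAbove_image_mutualInfoMAC N q') fun p hp => abs_mutualInfoMAC_sub_le_betaI hO hN hp hq hq'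
end

section
/- Let D ⊆ ℝ^d be a nonempty compact convex set, let ‖·‖ be a norm on ℝ^d, and let c₁, c₂ > 0 satisfy c₁‖x‖ ≤ ‖x‖₂ ≤ c₂‖x‖ for all x ∈ ℝ^d; set C = c₂/c₁. Let β and κ be admissible moduli with |β(s) − β(t)| ≤ κ(|s − t|) for all s, t ≥ 0, and let f: D → ℝ satisfy |f(x) − f(y)| ≤ β(‖x − y‖) for all x, y ∈ D. Let Π: ℝ^d → ℝ^d be the Euclidean metric projection onto D, i.e., Π(x) ∈ D with ‖x − Π(x)‖₂ ≤ ‖x − z‖₂ for all z ∈ D, and assume ‖Π(x) − Π(y)‖₂ ≤ ‖x − y‖₂ for all x, y ∈ ℝ^d. Define the extension f̄(x) = f(Π(x)) − β(‖x − Π(x)‖). Then for all x, y ∈ ℝ^d, |f̄(x) − f̄(y)| ≤ β(C‖x − y‖) + κ((C + 1)‖x − y‖). -/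
/-- An admissible modulus: non-negative, continuous, monotonically increasing on ℝ₊,
vanishing at 0. -/
def AdmissibleModulus (β : ℝ → ℝ) : Prop :=
  (∀ x, 0 ≤ x → 0 ≤ β x) ∧ ContinuousOn β (Set.Ici 0) ∧
    (∀ x y, 0 ≤ x → x ≤ y → β x ≤ β y) ∧ β 0 = 0

/-!
In the given norm `p`, a Euclidean non-expansive map `r` is Lipschitz with constant `C = c₂ / c₁`,
so the residual `x - r x` is Lipschitz with constant `C + 1`. The modulus `β` controls the term
`f (r x)` of the extension, and the modulus `κ` of `β` controls the penalty `β (p (x - r x))`.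
-/

theorem AdmissibleModulus.monotoneOn {β : ℝ → ℝ} (hβ : AdmissibleModulus β) :
    MonotoneOn β (Set.Ici 0) :=
  fun s hs t _ hst => hβ.2.2.1 s t hs hst

/-- The extension `f̄` of `f` along a map `r` into the domain of `f`: evaluate `f` at `r x` and
subtract the penalty `β (p (x - r x))`. The domain does not appear: only the values of `f` on the
range of `r` matter. -/
def penalizedExtension {E : Type*} [Sub E] (p : E → ℝ) (β : ℝ → ℝ) (f : E → ℝ) (r : E → E)
    (x : E) : ℝ :=
  f (r x) - β (p (x - r x))

theorem le_div_mul_of_norm_le {E : Type*} [Norm E] {p : E → ℝ} {c₁ c₂ : ℝ} (hc₁ : 0 < c₁)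
    (hlow : ∀ x, c₁ * p x ≤ ‖x‖) (hhigh : ∀ x, ‖x‖ ≤ c₂ * p x) {x y : E} (hxy : ‖x‖ ≤ ‖y‖) :
    p x ≤ c₂ / c₁ * p y := by
  rw [div_mul_eq_mul_div, le_div_iff₀' hc₁]
  exact (hlow x).trans (hxy.trans (hhigh y))

section Seminorm

variable {E F : Type*} [AddCommGroup E] [FunLike F E ℝ] [AddGroupSeminormClass F E ℝ]
  {p : F} {r : E → E} {C : ℝ}

theorem abs_map_residual_sub_map_residual_le
    (hr : ∀ x y, p (r x - r y) ≤ C * p (x - y)) (x y : E) :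
    |p (x - r x) - p (y - r y)| ≤ (C + 1) * p (x - y) :=
  calc |p (x - r x) - p (y - r y)|
      ≤ p (x - r x - (y - r y)) := abs_sub_map_le_sub p _ _
    _ = p (x - y - (r x - r y)) := by rw [sub_sub_sub_comm]
    _ ≤ p (x - y) + p (r x - r y) := map_sub_le_add p _ _
    _ ≤ p (x - y) + C * p (x - y) := by gcongr; exact hr x y
    _ = (C + 1) * p (x - y) := by ring

theorem abs_penalizedExtension_sub_le {D : Set E} {β κ : ℝ → ℝ} {f : E → ℝ}
    (hβ : MonotoneOn β (Set.Ici 0)) (hκ : MonotoneOn κ (Set.Ici 0))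
    (hβκ : ∀ s t : ℝ, 0 ≤ s → 0 ≤ t → |β s - β t| ≤ κ |s - t|)
    (hf : ∀ x ∈ D, ∀ y ∈ D, |f x - f y| ≤ β (p (x - y)))
    (hrD : ∀ x, r x ∈ D) (hr : ∀ x y, p (r x - r y) ≤ C * p (x - y)) (x y : E) :
    |penalizedExtension p β f r x - penalizedExtension p β f r y| ≤
      β (C * p (x - y)) + κ ((C + 1) * p (x - y)) := by
  have value_le : |f (r x) - f (r y)| ≤ β (C * p (x - y)) :=
    (hf _ (hrD x) _ (hrD y)).trans <|
      hβ (apply_nonneg p _) ((apply_nonneg p _).trans (hr x y)) (hr x y)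
  have residual_le := abs_map_residual_sub_map_residual_le hr x y
  have penalty_le : |β (p (x - r x)) - β (p (y - r y))| ≤ κ ((C + 1) * p (x - y)) :=
    (hβκ _ _ (apply_nonneg p _) (apply_nonneg p _)).trans <|
      hκ (Set.mem_Ici.2 (abs_nonneg _)) ((abs_nonneg _).trans residual_le) residual_le
  calc |penalizedExtension p β f r x - penalizedExtension p β f r y|
      = |f (r x) - f (r y) - (β (p (x - r x)) - β (p (y - r y)))| := by
        rw [penalizedExtension, penalizedExtension, sub_sub_sub_comm]
    _ ≤ |f (r x) - f (r y)| + |β (p (x - r x)) - β (p (y - r y))| := abs_sub _ _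
    _ ≤ β (C * p (x - y)) + κ ((C + 1) * p (x - y)) := add_le_add value_le penalty_le

end Seminorm

theorem stmt7_general {E F : Type*} [SeminormedAddCommGroup E] [FunLike F E ℝ]
    [AddGroupSeminormClass F E ℝ] {p : F} {c₁ c₂ : ℝ} (hc₁ : 0 < c₁)
    (hlow : ∀ x, c₁ * p x ≤ ‖x‖) (hhigh : ∀ x, ‖x‖ ≤ c₂ * p x)
    {β κ : ℝ → ℝ} (hβ : MonotoneOn β (Set.Ici 0)) (hκ : MonotoneOn κ (Set.Ici 0))
    (hβκ : ∀ s t : ℝ, 0 ≤ s → 0 ≤ t → |β s - β t| ≤ κ |s - t|)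
    {D : Set E} {f : E → ℝ} (hf : ∀ x ∈ D, ∀ y ∈ D, |f x - f y| ≤ β (p (x - y)))
    {r : E → E} (hrD : ∀ x, r x ∈ D) (hr : ∀ x y, ‖r x - r y‖ ≤ ‖x - y‖) (x y : E) :
    |penalizedExtension p β f r x - penalizedExtension p β f r y| ≤
      β (c₂ / c₁ * p (x - y)) + κ ((c₂ / c₁ + 1) * p (x - y)) :=
  abs_penalizedExtension_sub_le hβ hκ hβκ hf hrD
    (fun x y => le_div_mul_of_norm_le hc₁ hlow hhigh (hr x y)) x y

theorem stmt7 (d : ℕ) (D : Set (EuclideanSpace ℝ (Fin d)))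
    (hD : D.Nonempty) (hDc : IsCompact D) (hDconv : Convex ℝ D)
    (nrm : Seminorm ℝ (EuclideanSpace ℝ (Fin d))) (hnrm : ∀ x, nrm x = 0 → x = 0)
    (c1 c2 : ℝ) (hc1 : 0 < c1) (hc2 : 0 < c2)
    (hlow : ∀ x, c1 * nrm x ≤ ‖x‖) (hhigh : ∀ x, ‖x‖ ≤ c2 * nrm x)
    (C : ℝ) (hC : C = c2 / c1)
    (β κ : ℝ → ℝ) (hβ : AdmissibleModulus β) (hκ : AdmissibleModulus κ)
    (hβκ : ∀ s t : ℝ, 0 ≤ s → 0 ≤ t → |β s - β t| ≤ κ |s - t|)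
    (f : EuclideanSpace ℝ (Fin d) → ℝ)
    (hf : ∀ x ∈ D, ∀ y ∈ D, |f x - f y| ≤ β (nrm (x - y)))
    (proj : EuclideanSpace ℝ (Fin d) → EuclideanSpace ℝ (Fin d))
    (hprojD : ∀ x, proj x ∈ D)
    (hproj : ∀ x, ∀ z ∈ D, ‖x - proj x‖ ≤ ‖x - z‖)
    (hnonexp : ∀ x y, ‖proj x - proj y‖ ≤ ‖x - y‖)
    (fbar : EuclideanSpace ℝ (Fin d) → ℝ)
    (hfbar : ∀ x, fbar x = f (proj x) - β (nrm (x - proj x))) :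
    ∀ x y, |fbar x - fbar y| ≤ β (C * nrm (x - y)) + κ ((C + 1) * nrm (x - y)) := by
  obtain rfl : fbar = penalizedExtension nrm β f proj := funext hfbar
  subst hC
  exact stmt7_general hc1 hlow hhigh hβ.monotoneOn hκ.monotoneOn hβκ hf hprojD hnonexp
end

section
/- Let d ≥ 1 and N ≥ 1 be integers. For every x in the standard simplex Δ_d there exists n ∈ ℕ^d with Σ_{i=1}^d n_i = N such that ‖x − n/N‖₁ ≤ 2(d − 1)/N. That is, the grid Δ_{d,N} = {n/N : n ∈ ℕ^d, Σ_i n_i = N} is a (2(d−1)/N)-net of Δ_d in the l₁-norm. -/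
/-!
Scale `x` by `N`, round every coordinate but one down to an integer, and let the remaining
coordinate absorb the difference so that the total is `N`. Each of the `d - 1` rounded coordinates
has error in `[0, 1)`; since all errors sum to zero, the error of the remaining coordinate is minus
the sum of the others, so the `l₁`-error is exactly twice that sum.
-/

open Finset

theorem sum_abs_eq_two_nsmul_sum_erase {ι G : Type*} [DecidableEq ι]
    [AddCommGroup G] [LinearOrder G] [IsOrderedAddMonoid G]
    {s : Finset ι} {j : ι} (hj : j ∈ s) {f : ι → G}
    (hf : ∀ i ∈ s.erase j, 0 ≤ f i) (hsum : ∑ i ∈ s, f i = 0) :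
    ∑ i ∈ s, |f i| = 2 • ∑ i ∈ s.erase j, f i := by
  have hfj : f j = -∑ i ∈ s.erase j, f i :=
    eq_neg_of_add_eq_zero_left ((add_sum_erase s f hj).trans hsum)
  have habs : ∑ i ∈ s.erase j, |f i| = ∑ i ∈ s.erase j, f i :=
    sum_congr rfl fun i hi => abs_of_nonneg (hf i hi)
  rw [← add_sum_erase s _ hj, habs, hfj, abs_neg, abs_of_nonneg (sum_nonneg hf), two_nsmul]

theorem sum_floor_le_floor_sum {ι R : Type*} [Semiring R] [LinearOrder R] [IsOrderedAddMonoid R]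
    [FloorSemiring R] {s : Finset ι} {y : ι → R} (hy : ∀ i ∈ s, 0 ≤ y i) :
    ∑ i ∈ s, ⌊y i⌋₊ ≤ ⌊∑ i ∈ s, y i⌋₊ := by
  refine Nat.le_floor ?_
  rw [Nat.cast_sum]
  exact sum_le_sum fun i hi => Nat.floor_le (hy i hi)

section FloorExcept

variable {ι R : Type*} [Fintype ι] [DecidableEq ι]

/-- The integer rounding of `y` which takes floors away from the coordinate `j` and puts there
whatever makes the total `N`. The subtraction is truncated, so the total is `N` only if the other
floors sum to at most `N`. -/
def floorExcept [Semiring R] [PartialOrder R] [FloorSemiring R] (j : ι) (N : ℕ) (y : ι → R) :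
    ι → ℕ :=
  Function.update (fun i => ⌊y i⌋₊) j (N - ∑ i ∈ univ.erase j, ⌊y i⌋₊)

theorem floorExcept_of_ne [Semiring R] [PartialOrder R] [FloorSemiring R] {i j : ι} (hij : i ≠ j)
    (N : ℕ) (y : ι → R) : floorExcept j N y i = ⌊y i⌋₊ :=
  Function.update_of_ne hij _ _

theorem sum_floorExcept [Semiring R] [LinearOrder R] [IsStrictOrderedRing R] [FloorSemiring R]
    {N : ℕ} {y : ι → R} (hy : ∀ i, 0 ≤ y i) (hsum : ∑ i, y i = N) (j : ι) :
    ∑ i, floorExcept j N y i = N := by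
  have floors_le : ∑ i ∈ univ.erase j, ⌊y i⌋₊ ≤ N :=
    calc ∑ i ∈ univ.erase j, ⌊y i⌋₊
      _ ≤ ∑ i, ⌊y i⌋₊ := sum_le_sum_of_subset (erase_subset j univ)
      _ ≤ ⌊∑ i, y i⌋₊ := sum_floor_le_floor_sum fun i _ => hy i
      _ = N := by rw [hsum, Nat.floor_natCast]
  rw [floorExcept, sum_update_of_mem (mem_univ j), sdiff_singleton_eq_erase]
  exact Nat.sub_add_cancel floors_le

theorem sum_abs_sub_floorExcept_le [Ring R] [LinearOrder R] [IsStrictOrderedRing R]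
    [FloorSemiring R] {N : ℕ} {y : ι → R} (hy : ∀ i, 0 ≤ y i) (hsum : ∑ i, y i = N) (j : ι) :
    ∑ i, |y i - floorExcept j N y i| ≤ 2 * ((Fintype.card ι : R) - 1) := by
  have error_nonneg : ∀ i ∈ univ.erase j, 0 ≤ y i - floorExcept j N y i := fun i hi => by
    rw [floorExcept_of_ne (ne_of_mem_erase hi)]
    exact sub_nonneg.2 (Nat.floor_le (hy i))
  have error_le_one : ∀ i ∈ univ.erase j, y i - floorExcept j N y i ≤ 1 := fun i hi => by
    rw [floorExcept_of_ne (ne_of_mem_erase hi)]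
    exact sub_le_iff_le_add'.2 (Nat.lt_floor_add_one (y i)).le
  have sum_error : ∑ i, (y i - (floorExcept j N y i : R)) = 0 := by
    rw [sum_sub_distrib, hsum, ← Nat.cast_sum, sum_floorExcept hy hsum, sub_self]
  calc ∑ i, |y i - floorExcept j N y i|
    _ = 2 • ∑ i ∈ univ.erase j, (y i - (floorExcept j N y i : R)) :=
      sum_abs_eq_two_nsmul_sum_erase (mem_univ j) error_nonneg sum_error
    _ ≤ 2 • (#(univ.erase j) • (1 : R)) :=
      nsmul_le_nsmul_right (sum_le_card_nsmul _ _ _ error_le_one) 2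
    _ = 2 * ((Fintype.card ι : R) - 1) := by
      rw [nsmul_one, cast_card_erase_of_mem (mem_univ j), card_univ, nsmul_eq_mul, Nat.cast_ofNat]

end FloorExcept

theorem stmt11_general {ι K : Type*} [Fintype ι] [Nonempty ι] [Field K] [LinearOrder K]
    [IsStrictOrderedRing K] [FloorSemiring K] {N : ℕ} (hN : N ≠ 0)
    {x : ι → K} (hx : x ∈ stdSimplex K ι) :
    ∃ n : ι → ℕ, ∑ i, n i = N ∧
      ∑ i, |x i - (n i : K) / N| ≤ 2 * ((Fintype.card ι : K) - 1) / N := by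
  classical
  obtain ⟨j⟩ := ‹Nonempty ι›
  have hNpos : (0 : K) < N := Nat.cast_pos.2 (Nat.pos_of_ne_zero hN)
  have scaled_nonneg : ∀ i, 0 ≤ N * x i := fun i => mul_nonneg hNpos.le (hx.1 i)
  have sum_scaled : ∑ i, N * x i = N := by rw [← mul_sum, hx.2, mul_one]
  refine ⟨floorExcept j N fun i => N * x i, sum_floorExcept scaled_nonneg sum_scaled j, ?_⟩
  have abs_unscale (a b : K) : |a - b / N| = |N * a - b| / N := by
    rw [sub_div' hNpos.ne', abs_div, Nat.abs_cast, mul_comm a]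
  simp only [abs_unscale, ← sum_div]
  gcongr
  exact sum_abs_sub_floorExcept_le scaled_nonneg sum_scaled j

theorem stmt11 (d N : ℕ) (hd : 1 ≤ d) (hN : 1 ≤ N)
    (x : Fin d → ℝ) (hx : inSimplex x) :
    ∃ n : Fin d → ℕ, (∑ i, n i = N) ∧
      ∑ i, |x i - (n i : ℝ) / N| ≤ 2 * ((d : ℝ) - 1) / N := by
  have : Nonempty (Fin d) := ⟨⟨0, hd⟩⟩
  simpa only [Fintype.card_fin] using stmt11_general (Nat.ne_of_gt hN) hx
end

section
/- Let d ≥ 2 and N ≥ 1 be integers, let I_{d,N} = {n ∈ ℕ^d : Σ_{i=1}^d n_i = N}, and let M = binom(N + d − 1, d − 1), which equals |I_{d,N}|. Then there exists a bijection e: {0, 1, …, M−1} → I_{d,N} such that e(0) = (N, 0, …, 0), e(M−1) = (0, …, 0, N), and ‖e(k+1) − e(k)‖₁ = 2 for every k ∈ {0, …, M−2}. That is, the integer grid I_{d,N} can be ordered so that any two consecutive elements are at l₁-distance exactly 2. -/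
/-!
Join two points of `ℕ^ι` when their `l₁`-distance is `2`. For a finite set `s` of coordinates,
`Finset.piAntidiag s N` is the grid of points supported in `s` with coordinate sum `N`, and any two
distinct corners `N • eᵢ`, `N • eⱼ` of it are the ends of a path through each of its points once.
Indeed, the points of the grid of level `N + 1` with positive `i`-th coordinate form a translate
by `eᵢ` of the grid of level `N`, and the others form the grid of level `N + 1` over `s \ {i}`.
Choose a corner `k ≠ i`, with `k ≠ j` unless `s = {i, j}`. By induction the first part is traversed
from `(N + 1) • eᵢ` to `eᵢ + N • eₖ`, and after a step to `(N + 1) • eₖ` the second part is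
traversed up to `(N + 1) • eⱼ`.
-/

open Finset

section Spanning

variable {V W : Type*} {G : SimpleGraph V} {H : SimpleGraph W} {S T : Finset V} {u v x y : V}

/-- There is a path in `G` from `u` to `v` whose set of vertices is exactly `S`, that is, a
Hamiltonian path of the part of `G` on `S`. Vertices stay in the ambient type, so that the paths on
different `S` can be joined without coercions. -/
def HasSpanningPath (G : SimpleGraph V) (S : Finset V) (u v : V) : Prop :=
  ∃ p : G.Walk u v, p.IsPath ∧ ∀ w, w ∈ p.support ↔ w ∈ S

namespace HasSpanningPath

lemma singleton (G : SimpleGraph V) (u : V) : HasSpanningPath G {u} u u :=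
  ⟨.nil, .nil, by simp⟩

lemma map (h : HasSpanningPath G S u v) (f : G ↪g H) :
    HasSpanningPath H (S.map f.toEmbedding) (f u) (f v) := by
  obtain ⟨p, hp, hS⟩ := h
  exact ⟨p.map f.toHom, hp.map f.injective, by simp [hS]⟩

lemma disjUnion (hS : HasSpanningPath G S u x) (hadj : G.Adj x y)
    (hT : HasSpanningPath G T y v) (hST : Disjoint S T) :
    HasSpanningPath G (S.disjUnion T hST) u v := by
  obtain ⟨p, hp, hpS⟩ := hS
  obtain ⟨q, hq, hqT⟩ := hT
  have support_eq : (p.append (.cons hadj q)).support = p.support ++ q.support := by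
    rw [SimpleGraph.Walk.support_append, SimpleGraph.Walk.support_cons, List.tail_cons]
  refine ⟨p.append (.cons hadj q), .mk' ?_, fun w ↦ ?_⟩
  · rw [support_eq]
    refine hp.support_nodup.append hq.support_nodup fun w hwp hwq ↦ ?_
    exact Finset.disjoint_left.1 hST ((hpS w).1 hwp) ((hqT w).1 hwq)
  · rw [support_eq, List.mem_append, hpS, hqT, mem_disjUnion]

lemma exists_enumeration (h : HasSpanningPath G S u v) :
    ∃ e : ℕ → V, Set.BijOn e (Set.Iio #S) S ∧ e 0 = u ∧ e (#S - 1) = v ∧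
      ∀ k, k + 1 < #S → G.Adj (e k) (e (k + 1)) := by
  classical
  obtain ⟨p, hp, hS⟩ := h
  have card_eq : #S = p.length + 1 := by
    rw [← p.length_support, ← List.toFinset_card_of_nodup hp.support_nodup]
    congr 1
    ext w
    rw [List.mem_toFinset, hS]
  rw [card_eq]
  refine ⟨p.getVert, ⟨fun k _ ↦ (hS _).1 (p.getVert_mem_support k), ?_, fun w hw ↦ ?_⟩,
    p.getVert_zero, p.getVert_length, fun k hk ↦ p.adj_getVert_succ (by lia)⟩
  · exact hp.getVert_injOn.mono fun k hk ↦ Nat.le_of_lt_succ hk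
  · obtain ⟨k, hk, hle⟩ := SimpleGraph.Walk.mem_support_iff_exists_getVert.1 ((hS w).2 hw)
    exact ⟨k, Nat.lt_succ_of_le hle, hk⟩

end HasSpanningPath

end Spanning

section Grid

variable {ι : Type*}

/-- The graph on `ℕ^ι` joining the points at `l₁`-distance exactly `2`. The `l₁`-distance is
written out as a sum because the norm of `ι → ℝ` is the sup norm. -/
def l1DistTwoGraph (ι : Type*) [Fintype ι] : SimpleGraph (ι → ℕ) where
  Adj u v := ∑ i, |(v i : ℝ) - u i| = 2
  symm := ⟨fun u v h ↦ by simpa only [abs_sub_comm] using h⟩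
  loopless := ⟨fun u h ↦ by simp at h⟩

/-- Translation by `a` as an embedding of `l1DistTwoGraph ι` into itself. -/
def l1DistTwoGraphAddLeft [Fintype ι] (a : ι → ℕ) : l1DistTwoGraph ι ↪g l1DistTwoGraph ι where
  toEmbedding := addLeftEmbedding a
  map_rel_iff' := by simp [l1DistTwoGraph]

variable [DecidableEq ι]

lemma l1DistTwoGraph_adj_single_add_single_add [Fintype ι] {i k : ι} (hik : i ≠ k) (w : ι → ℕ) :
    (l1DistTwoGraph ι).Adj (Pi.single i 1 + w) (Pi.single k 1 + w) := by
  have abs_eq (l : ι) : |((Pi.single k 1 + w : ι → ℕ) l : ℝ) - (Pi.single i 1 + w : ι → ℕ) l| =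
      (if l = k then 1 else 0) + if l = i then 1 else 0 := by
    simp only [Pi.add_apply, Pi.single_apply]
    split_ifs <;> simp_all
  simp only [l1DistTwoGraph, abs_eq, sum_add_distrib, sum_ite_eq', mem_univ, if_true]
  norm_num

lemma piAntidiag_singleton (i : ι) (N : ℕ) : piAntidiag {i} N = {Pi.single i N} := by
  ext v
  simp only [mem_piAntidiag, sum_singleton, mem_singleton]
  constructor
  · rintro ⟨rfl, hsupp⟩
    ext l
    grind
  · rintro rfl
    simp +contextual [Pi.single_apply]

lemma card_piAntidiag (s : Finset ι) (N : ℕ) : #(piAntidiag s N) = (#s + N - 1).choose N := by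
  rw [← card_finsuppAntidiag_nat_eq_choose, finsuppAntidiag, card_map, card_attach]

lemma single_add_mem_piAntidiag_succ {i : ι} {s : Finset ι} (hi : i ∈ s) {N : ℕ} {w : ι → ℕ} :
    Pi.single i 1 + w ∈ piAntidiag s (N + 1) ↔ w ∈ piAntidiag s N := by
  have sum_eq : ∑ l ∈ s, (Pi.single i 1 + w : ι → ℕ) l = ∑ l ∈ s, w l + 1 := by
    simp [sum_add_distrib, sum_pi_single', hi, add_comm]
  rw [mem_piAntidiag, mem_piAntidiag, sum_eq, Nat.add_right_cancel_iff]
  refine and_congr_right' (forall_congr' fun l ↦ ?_)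
  by_cases hl : l = i <;> simp [hl, hi]

lemma mem_piAntidiag_insert_of_apply_eq_zero {i : ι} {t : Finset ι} (hi : i ∉ t) {N : ℕ}
    {v : ι → ℕ} (hv : v i = 0) : v ∈ piAntidiag (insert i t) N ↔ v ∈ piAntidiag t N := by
  rw [mem_piAntidiag, mem_piAntidiag, sum_insert hi, hv, zero_add]
  grind

lemma single_add_notMem_piAntidiag {i : ι} {t : Finset ι} (hi : i ∉ t) (N : ℕ) (w : ι → ℕ) :
    Pi.single i 1 + w ∉ piAntidiag t N :=
  fun h ↦ hi ((mem_piAntidiag.1 h).2 i (by simp))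

lemma disjoint_map_addLeft_single_piAntidiag {i : ι} {t : Finset ι} (hi : i ∉ t)
    (A : Finset (ι → ℕ)) (N : ℕ) :
    Disjoint (A.map (addLeftEmbedding (Pi.single i 1))) (piAntidiag t N) := by
  simp only [Finset.disjoint_left, forall_mem_map]
  exact fun w _ ↦ single_add_notMem_piAntidiag hi N w

lemma piAntidiag_insert_succ {i : ι} {t : Finset ι} (hi : i ∉ t) (N : ℕ) :
    piAntidiag (insert i t) (N + 1) =
      ((piAntidiag (insert i t) N).map (addLeftEmbedding (Pi.single i 1))).disjUnion
        (piAntidiag t (N + 1)) (disjoint_map_addLeft_single_piAntidiag hi _ _) := by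
  ext v
  simp only [mem_disjUnion, mem_map, addLeftEmbedding_apply]
  obtain hv | hv := Nat.eq_zero_or_pos (v i)
  · have not_translate (w : ι → ℕ) : Pi.single i 1 + w ≠ v := by
      rintro rfl
      simp at hv
    simp [mem_piAntidiag_insert_of_apply_eq_zero hi hv, not_translate, -mem_piAntidiag]
  · have single_le : Pi.single i 1 ≤ v := by
      intro l
      grind
    obtain ⟨w, rfl⟩ := exists_add_of_le single_le
    simp [single_add_mem_piAntidiag_succ, single_add_notMem_piAntidiag hi, -mem_piAntidiag]

variable [Fintype ι]

lemma hasSpanningPath_piAntidiag_insert {i : ι} {t : Finset ι} (hi : i ∉ t)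
    (ht : ∀ N, ∀ k ∈ t, ∀ j ∈ t, (t.Nontrivial → k ≠ j) →
      HasSpanningPath (l1DistTwoGraph ι) (piAntidiag t N) (Pi.single k N) (Pi.single j N))
    (N : ℕ) {j : ι} (hj : j ∈ t) :
    HasSpanningPath (l1DistTwoGraph ι) (piAntidiag (insert i t) N)
      (Pi.single i N) (Pi.single j N) := by
  induction N generalizing j with
  | zero => simpa using HasSpanningPath.singleton (l1DistTwoGraph ι) 0
  | succ N ih =>
    obtain ⟨k, hk, hkj⟩ : ∃ k ∈ t, t.Nontrivial → k ≠ j := by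
      by_cases hnt : t.Nontrivial
      · obtain ⟨k, hk, hkj⟩ := hnt.exists_ne j
        exact ⟨k, hk, fun _ ↦ hkj⟩
      · exact ⟨j, hj, fun h ↦ absurd h hnt⟩
    have single_succ (l : ι) : (Pi.single l (N + 1) : ι → ℕ) = Pi.single l 1 + Pi.single l N := by
      rw [← Pi.single_add, add_comm]
    have translate := (ih hk).map (l1DistTwoGraphAddLeft (Pi.single i 1))
    have face := ht (N + 1) k hk j hj hkj
    rw [single_succ k] at face
    rw [piAntidiag_insert_succ hi, single_succ i]
    have hik : i ≠ k := (ne_of_mem_of_not_mem hk hi).symm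
    exact translate.disjUnion (l1DistTwoGraph_adj_single_add_single_add hik _) face _

theorem hasSpanningPath_piAntidiag (s : Finset ι) (N : ℕ) {i j : ι} (hi : i ∈ s) (hj : j ∈ s)
    (hij : s.Nontrivial → i ≠ j) :
    HasSpanningPath (l1DistTwoGraph ι) (piAntidiag s N) (Pi.single i N) (Pi.single j N) := by
  induction s using Finset.strongInduction generalizing N i j with
  | H s ih =>
    obtain rfl | hs := eq_singleton_or_nontrivial hi
    · obtain rfl : j = i := mem_singleton.1 hj
      rw [piAntidiag_singleton]
      exact .singleton _ _
    · rw [← insert_erase hi]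
      refine hasSpanningPath_piAntidiag_insert (notMem_erase i s) (fun N k hk l hl hkl ↦ ?_) N
        (mem_erase.2 ⟨(hij hs).symm, hj⟩)
      exact ih _ (erase_ssubset hi) N hk hl hkl

end Grid

theorem stmt12 (d N : ℕ) (hd : 2 ≤ d) (hN : 1 ≤ N)
    (M : ℕ) (hM : M = Nat.choose (N + d - 1) (d - 1)) :
    ∃ e : ℕ → Fin d → ℕ,
      (∀ k < M, ∑ i, e k i = N) ∧
      (∀ k < M, ∀ l < M, e k = e l → k = l) ∧
      (∀ n : Fin d → ℕ, (∑ i, n i = N) → ∃ k < M, e k = n) ∧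
      (e 0 = fun i : Fin d => if (i : ℕ) = 0 then N else 0) ∧
      (e (M - 1) = fun i : Fin d => if (i : ℕ) = d - 1 then N else 0) ∧
      ∀ k, k + 1 < M → ∑ i, |((e (k + 1) i : ℝ)) - (e k i : ℝ)| = 2 := by
  obtain ⟨d, rfl⟩ := Nat.exists_eq_add_of_le' hd
  have card_grid : #(piAntidiag (univ : Finset (Fin (d + 2))) N) = M := by
    rw [card_piAntidiag, card_fin, hM, add_comm (d + 2)]
    exact Nat.choose_symm_of_eq_add (by lia)
  have mem_grid (n : Fin (d + 2) → ℕ) : n ∈ piAntidiag univ N ↔ ∑ i, n i = N := by simp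
  obtain ⟨e, he, he_zero, he_last, he_adj⟩ :=
    (hasSpanningPath_piAntidiag univ N (mem_univ 0) (mem_univ (Fin.last (d + 1)))
      fun _ ↦ Fin.last_pos.ne).exists_enumeration
  rw [card_grid] at he he_last he_adj
  refine ⟨e, fun k hk ↦ (mem_grid _).1 (he.mapsTo hk), fun k hk l hl ↦ he.injOn hk hl,
    fun n hn ↦ he.surjOn ((mem_grid n).2 hn), ?_, ?_, he_adj⟩
  · ext i
    simp only [he_zero, Pi.single_apply, Fin.ext_iff, Fin.val_zero]
  · ext i
    simp only [he_last, Pi.single_apply, Fin.ext_iff, Fin.val_last, Nat.add_one_sub_one]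
end

section
/- Let d ≥ 2 and N ≥ 1 be integers and set L = (2/N)·binom(N + d − 1, d − 1). Then there exists a curve γ: [0, L] → Δ_d such that (i) ‖γ(θ) − γ(θ')‖₁ ≤ min{|θ − θ'|, 2} for all θ, θ' ∈ [0, L] (in particular γ is 1-Lipschitz from (ℝ, |·|) to (ℝ^d, ‖·‖₁)), and (ii) for every x ∈ Δ_d there exists θ ∈ [0, L] with ‖γ(θ) − x‖₁ ≤ 2(d − 1)/N, i.e., γ is (2(d−1)/N)-dense in Δ_d with respect to the l₁-norm. -/
/-!
The points of the simplex with coordinates in `ℕ / N` correspond to the `d`-tuples of natural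
numbers with sum `N`; there are `binom (N + d - 1) (d - 1)` of them, and moving one unit from one
coordinate to another is a step of `ℓ¹`-length `2 / N`. A Gray-code walk visits each of them once
using only such moves: first visit the tuples with positive first coordinate (recursively, the
tuples of sum `N - 1`), then those with first coordinate zero (recursively, the tuples of length
`d - 1`), choosing the end vertex of the first part to match the start vertex of the second.
Interpolating the walk linearly at unit speed gives the curve, and rounding all coordinates but one
down to multiples of `1 / N` shows that every point of the simplex is within `2 (d - 1) / N` of a
visited point.
-/

section PolygonalPath

variable {E : Type*} [AddCommGroup E] [Module ℝ E]

/-- The piecewise linear path with vertices `f 0, f 1, f 2, …`, passing through `f k` at time `k`.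
It is meaningful for nonnegative times only. -/
noncomputable def polygonalPath (f : ℕ → E) (t : ℝ) : E :=
  AffineMap.lineMap (f ⌊t⌋₊) (f (⌊t⌋₊ + 1)) (t - ⌊t⌋₊)

@[simp]
lemma polygonalPath_natCast (f : ℕ → E) (k : ℕ) : polygonalPath f k = f k := by
  simp [polygonalPath]

lemma polygonalPath_mem {f : ℕ → E} {s : Set E} (hs : Convex ℝ s) (hf : ∀ k, f k ∈ s) {t : ℝ}
    (ht : 0 ≤ t) : polygonalPath f t ∈ s :=
  hs.lineMap_mem (hf _) (hf _)
    ⟨sub_nonneg.2 (Nat.floor_le ht), by linarith [Nat.lt_floor_add_one t]⟩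

end PolygonalPath

section PolygonalPathDist

variable {E : Type*} [SeminormedAddCommGroup E] [NormedSpace ℝ E] {f : ℕ → E} {c : ℝ}

lemma dist_polygonalPath_floor_le (hf : ∀ k, dist (f k) (f (k + 1)) ≤ c) {t : ℝ}
    (ht : 0 ≤ t) : dist (polygonalPath f t) (f ⌊t⌋₊) ≤ c * (t - ⌊t⌋₊) := by
  have hfloor : 0 ≤ t - ⌊t⌋₊ := sub_nonneg.2 (Nat.floor_le ht)
  rw [polygonalPath, dist_lineMap_left, Real.norm_of_nonneg hfloor, mul_comm]
  exact mul_le_mul_of_nonneg_right (hf _) hfloor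

lemma dist_polygonalPath_floor_add_one_le (hf : ∀ k, dist (f k) (f (k + 1)) ≤ c) (t : ℝ) :
    dist (polygonalPath f t) (f (⌊t⌋₊ + 1)) ≤ c * (⌊t⌋₊ + 1 - t) := by
  have hfloor : 0 ≤ 1 - (t - ⌊t⌋₊) := by linarith [Nat.lt_floor_add_one t]
  rw [polygonalPath, dist_lineMap_right, Real.norm_of_nonneg hfloor, mul_comm]
  exact (mul_le_mul_of_nonneg_right (hf _) hfloor).trans_eq (by ring)

lemma dist_polygonalPath_le_of_le (hf : ∀ k, dist (f k) (f (k + 1)) ≤ c) {s t : ℝ}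
    (hs : 0 ≤ s) (hst : s ≤ t) :
    dist (polygonalPath f s) (polygonalPath f t) ≤ c * (t - s) := by
  rcases (Nat.floor_mono hst).eq_or_lt with hfloor | hfloor
  · rw [polygonalPath, polygonalPath, ← hfloor, dist_lineMap_lineMap, dist_comm, Real.dist_eq,
      sub_sub_sub_cancel_right, abs_of_nonneg (sub_nonneg.2 hst), mul_comm]
    exact mul_le_mul_of_nonneg_right (hf _) (sub_nonneg.2 hst)
  · have hvertices : dist (f (⌊s⌋₊ + 1)) (f ⌊t⌋₊) ≤ c * (⌊t⌋₊ - (⌊s⌋₊ + 1)) := by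
      have hsucc : ⌊s⌋₊ + 1 ≤ ⌊t⌋₊ := hfloor
      refine (dist_le_Ico_sum_of_dist_le (f := f) hsucc fun _ _ => hf _).trans_eq ?_
      rw [Finset.sum_const, Nat.card_Ico, nsmul_eq_mul, Nat.cast_sub hsucc, Nat.cast_add_one,
        mul_comm]
    calc dist (polygonalPath f s) (polygonalPath f t)
        ≤ dist (polygonalPath f s) (f (⌊s⌋₊ + 1)) + dist (f (⌊s⌋₊ + 1)) (f ⌊t⌋₊)
            + dist (f ⌊t⌋₊) (polygonalPath f t) := dist_triangle4 _ _ _ _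
      _ ≤ c * (⌊s⌋₊ + 1 - s) + c * (⌊t⌋₊ - (⌊s⌋₊ + 1)) + c * (t - ⌊t⌋₊) := by
          rw [dist_comm (f ⌊t⌋₊)]
          gcongr
          · exact dist_polygonalPath_floor_add_one_le hf s
          · exact dist_polygonalPath_floor_le hf (hs.trans hst)
      _ = c * (t - s) := by ring

lemma dist_polygonalPath_le (hf : ∀ k, dist (f k) (f (k + 1)) ≤ c) {s t : ℝ}
    (hs : 0 ≤ s) (ht : 0 ≤ t) :
    dist (polygonalPath f s) (polygonalPath f t) ≤ c * |s - t| := by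
  rcases le_total s t with hst | hts
  · rw [abs_sub_comm, abs_of_nonneg (sub_nonneg.2 hst)]
    exact dist_polygonalPath_le_of_le hf hs hst
  · rw [dist_comm, abs_of_nonneg (sub_nonneg.2 hts)]
    exact dist_polygonalPath_le_of_le hf ht hts

lemma dist_polygonalPath_div_le (hf : ∀ k, dist (f k) (f (k + 1)) ≤ c) (hc : 0 < c)
    {s t : ℝ} (hs : 0 ≤ s) (ht : 0 ≤ t) :
    dist (polygonalPath f (s / c)) (polygonalPath f (t / c)) ≤ |s - t| := by
  refine (dist_polygonalPath_le hf (by positivity) (by positivity)).trans_eq ?_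
  rw [← sub_div, abs_div, abs_of_pos hc, mul_div_cancel₀ _ hc.ne']

end PolygonalPathDist

section UnitTransferGraph

/-- The graph on tuples of natural numbers in which two distinct tuples are adjacent when one is
obtained from the other by moving one unit from a coordinate `j` to a coordinate `i`. The condition
`b = a - eⱼ + eᵢ` is stated without truncated subtraction. -/
def unitTransferGraph (ι : Type*) [DecidableEq ι] : SimpleGraph (ι → ℕ) where
  Adj a b := a ≠ b ∧ ∃ i j, a + Pi.single i 1 = b + Pi.single j 1
  symm := ⟨fun _ _ ⟨hne, i, j, h⟩ => ⟨hne.symm, j, i, h.symm⟩⟩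
  loopless := ⟨fun _ h => h.1 rfl⟩

variable {ι : Type*} [DecidableEq ι]

lemma sum_eq_of_unitTransferGraph_adj [Fintype ι] {a b : ι → ℕ}
    (h : (unitTransferGraph ι).Adj a b) : ∑ i, a i = ∑ i, b i := by
  obtain ⟨-, i, j, h⟩ := h
  simpa [Finset.sum_add_distrib] using congrArg (fun v : ι → ℕ => ∑ k, v k) h

lemma sum_eq_of_unitTransferGraph_walk [Fintype ι] {a b : ι → ℕ}
    (w : (unitTransferGraph ι).Walk a b) : ∑ i, a i = ∑ i, b i := by
  induction w with
  | nil => rfl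
  | cons h _ ih => exact (sum_eq_of_unitTransferGraph_adj h).trans ih

lemma sum_abs_sub_le_two_of_unitTransferGraph_adj [Fintype ι] {a b : ι → ℕ}
    (h : (unitTransferGraph ι).Adj a b) : ∑ k, |(a k : ℝ) - b k| ≤ 2 := by
  obtain ⟨-, i, j, h⟩ := h
  have hsub (k : ι) : (a k : ℝ) - b k = (Pi.single j 1 : ι → ℝ) k - (Pi.single i 1 : ι → ℝ) k := by
    have hk := congrArg (Nat.cast (R := ℝ)) (congrFun h k)
    simp only [Pi.add_apply, Pi.single_apply] at hk ⊢
    push_cast at hk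
    linarith
  calc ∑ k, |(a k : ℝ) - b k|
      ≤ ∑ k, ((Pi.single j 1 : ι → ℝ) k + (Pi.single i 1 : ι → ℝ) k) := by
        refine Finset.sum_le_sum fun k _ => ?_
        rw [hsub]
        refine (abs_sub _ _).trans_eq ?_
        simp only [Pi.single_apply]
        split_ifs <;> simp
    _ = 2 := by simp [Finset.sum_add_distrib, one_add_one_eq_two]

/-- Adding a fixed tuple, as an endomorphism of the unit transfer graph. -/
def addRightHom (v : ι → ℕ) : unitTransferGraph ι →g unitTransferGraph ι where
  toFun a := a + v
  map_rel' := fun ⟨hne, i, j, h⟩ =>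
    ⟨fun e => hne (add_right_cancel e), i, j, by rw [add_right_comm, h, add_right_comm]⟩

lemma addRightHom_apply (v a : ι → ℕ) : addRightHom v a = a + v := rfl

lemma cons_zero_add_single {d : ℕ} (a : Fin d → ℕ) (i : Fin d) (n : ℕ) :
    (Fin.cons 0 a + Pi.single i.succ n : Fin (d + 1) → ℕ) = Fin.cons 0 (a + Pi.single i n) := by
  ext k
  cases k using Fin.cases <;> simp [Pi.single_apply]

/-- Prepending a zero coordinate, as a homomorphism of unit transfer graphs. -/
def consZeroHom (d : ℕ) : unitTransferGraph (Fin d) →g unitTransferGraph (Fin (d + 1)) where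
  toFun a := Fin.cons 0 a
  map_rel' := fun ⟨hne, i, j, h⟩ => ⟨fun e => hne (Fin.cons_right_injective _ e), i.succ, j.succ, by
    rw [cons_zero_add_single, h, cons_zero_add_single]⟩

lemma consZeroHom_single {d : ℕ} (i : Fin d) (n : ℕ) :
    consZeroHom d (Pi.single i n) = Pi.single i.succ n := by
  ext k
  cases k using Fin.cases <;> simp [consZeroHom, Pi.single_apply]

end UnitTransferGraph

section Sweep

variable {d n : ℕ}

/-- There is a walk of unit transfers from `u` to `v` with as many vertices as there are
`(d + 1)`-tuples of sum `n`, and visiting all of those tuples. -/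
def HasSweep (n : ℕ) (u v : Fin (d + 1) → ℕ) : Prop :=
  ∃ w : (unitTransferGraph (Fin (d + 1))).Walk u v,
    w.length + 1 = (n + d).choose d ∧ ∀ x, ∑ i, x i = n → x ∈ w.support

lemma HasSweep.symm {u v : Fin (d + 1) → ℕ} : HasSweep n u v → HasSweep n v u :=
  fun ⟨w, hlength, hmem⟩ => ⟨w.reverse, by simpa using hlength, by simpa using hmem⟩

lemma hasSweep_fin_one (n : ℕ) (u : Fin 1 → ℕ) (hu : u 0 = n) : HasSweep n u u := by
  refine ⟨.nil, by simp, fun x hx => ?_⟩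
  rw [Fin.sum_univ_one, ← hu] at hx
  simpa [funext_iff] using hx

lemma hasSweep_zero (d : ℕ) : HasSweep 0 (0 : Fin (d + 1) → ℕ) 0 :=
  ⟨.nil, by simp, fun x hx => by simpa [funext_iff] using hx⟩

lemma exists_eq_add_single_or_eq_cons_zero {x : Fin (d + 1) → ℕ} (hx : ∑ i, x i = n + 1) :
    (∃ y : Fin (d + 1) → ℕ, ∑ i, y i = n ∧ y + Pi.single 0 1 = x) ∨
      ∃ y : Fin d → ℕ, ∑ i, y i = n + 1 ∧ Fin.cons 0 y = x := by
  rw [Fin.sum_univ_succ] at hx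
  rcases Nat.eq_zero_or_eq_succ_pred (x 0) with h | h
  · exact .inr ⟨Fin.tail x, by simpa [h, Fin.tail] using hx, by rw [← h, Fin.cons_self_tail]⟩
  · refine .inl ⟨Fin.cons (x 0 - 1) (Fin.tail x), ?_, ?_⟩
    · simp only [Fin.sum_univ_succ, Fin.cons_zero, Fin.cons_succ, Fin.tail]
      omega
    · ext k
      cases k using Fin.cases
      · simpa using h.symm
      · simp [Fin.tail]

lemma HasSweep.stack {u v : Fin (d + 2) → ℕ} {u' v' : Fin (d + 1) → ℕ} (hpos : HasSweep n u v)
    (hzero : HasSweep (n + 1) u' v')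
    (hadj : (unitTransferGraph _).Adj (addRightHom (Pi.single 0 1) v) (consZeroHom _ u')) :
    HasSweep (n + 1) (addRightHom (Pi.single 0 1) u) (consZeroHom _ v') := by
  obtain ⟨w, hw_length, hw_mem⟩ := hpos
  obtain ⟨w', hw'_length, hw'_mem⟩ := hzero
  refine ⟨(w.map (addRightHom (Pi.single 0 1))).append (.cons hadj (w'.map (consZeroHom _))),
    ?_, fun x hx => ?_⟩
  · have hpascal : (n + 1 + (d + 1)).choose (d + 1)
        = (n + 1 + d).choose d + (n + (d + 1)).choose (d + 1) := by
      rw [← add_assoc (n + 1), Nat.choose_succ_succ, add_right_comm n 1 d, add_assoc n]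
    simp only [SimpleGraph.Walk.length_append, SimpleGraph.Walk.length_cons,
      SimpleGraph.Walk.length_map]
    omega
  · simp only [SimpleGraph.Walk.mem_support_append_iff, SimpleGraph.Walk.support_cons,
      List.mem_cons, SimpleGraph.Walk.support_map, List.mem_map]
    rcases exists_eq_add_single_or_eq_cons_zero hx with ⟨y, hy, rfl⟩ | ⟨y, hy, rfl⟩
    · exact .inl ⟨y, hw_mem y hy, rfl⟩
    · exact .inr (.inr ⟨y, hw'_mem y hy, rfl⟩)

lemma HasSweep.succ_single {j t : Fin (d + 1)}
    (hpos : HasSweep n (Pi.single 0 n : Fin (d + 2) → ℕ) (Pi.single j.succ n))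
    (hzero : HasSweep (n + 1) (Pi.single j (n + 1)) (Pi.single t (n + 1))) :
    HasSweep (n + 1) (Pi.single 0 (n + 1) : Fin (d + 2) → ℕ) (Pi.single t.succ (n + 1)) := by
  have hadj : (unitTransferGraph _).Adj (addRightHom (Pi.single 0 1) (Pi.single j.succ n))
      (consZeroHom _ (Pi.single j (n + 1))) := by
    rw [addRightHom_apply, consZeroHom_single, Pi.single_add]
    refine ⟨fun h => ?_, j.succ, 0, add_right_comm ..⟩
    simpa using congrFun h 0
  simpa only [addRightHom_apply, consZeroHom_single, ← Pi.single_add] using hpos.stack hzero hadj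

/- A sweep of the tuples of sum `n + 1` ending at one of the coordinates `1`, `last` of
`Fin (d + 2)` uses a sweep of the tuples of sum `n` ending at the other one. -/
lemma hasSweep_single_succ_zero_and_last
    (hface : ∀ n, HasSweep n (Pi.single (0 : Fin (d + 1)) n) (Pi.single (Fin.last d) n)) (n : ℕ) :
    HasSweep n (Pi.single 0 n : Fin (d + 2) → ℕ) (Pi.single (Fin.succ 0) n) ∧
      HasSweep n (Pi.single 0 n : Fin (d + 2) → ℕ) (Pi.single (Fin.last d).succ n) := by
  induction n with
  | zero => simpa only [Pi.single_zero, and_self] using hasSweep_zero (d + 1)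
  | succ n ih => exact ⟨ih.2.succ_single (hface (n + 1)).symm, ih.1.succ_single (hface (n + 1))⟩

theorem hasSweep_single_zero_last (d n : ℕ) :
    HasSweep n (Pi.single (0 : Fin (d + 1)) n) (Pi.single (Fin.last d) n) := by
  induction d generalizing n with
  | zero => exact hasSweep_fin_one n _ (Pi.single_eq_same _ _)
  | succ d ih => exact (hasSweep_single_succ_zero_and_last ih n).2

end Sweep

section Grid

variable {ι : Type*} [Fintype ι]

lemma sum_abs_sub_le_two_of_mem_stdSimplex {p q : ι → ℝ} (hp : p ∈ stdSimplex ℝ ι)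
    (hq : q ∈ stdSimplex ℝ ι) : ∑ i, |p i - q i| ≤ 2 :=
  calc ∑ i, |p i - q i|
      ≤ ∑ i, (p i + q i) := Finset.sum_le_sum fun i _ =>
        (abs_sub _ _).trans_eq (by rw [abs_of_nonneg (hp.1 i), abs_of_nonneg (hq.1 i)])
    _ = 2 := by rw [Finset.sum_add_distrib, hp.2, hq.2]; norm_num

lemma sum_abs_sub_eq_two_mul_sum_erase [DecidableEq ι] {p q : ι → ℝ} (i₀ : ι)
    (hsum : ∑ i, p i = ∑ i, q i) (hle : ∀ i ≠ i₀, p i ≤ q i) :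
    ∑ i, |p i - q i| = 2 * ∑ i ∈ Finset.univ.erase i₀, (q i - p i) := by
  have hrest : ∑ i ∈ Finset.univ.erase i₀, |p i - q i| = ∑ i ∈ Finset.univ.erase i₀, (q i - p i) :=
    Finset.sum_congr rfl fun i hi => by
      rw [abs_sub_comm, abs_of_nonneg (sub_nonneg.2 (hle i (Finset.ne_of_mem_erase hi)))]
  have hi₀ : p i₀ - q i₀ = ∑ i ∈ Finset.univ.erase i₀, (q i - p i) := by
    rw [← Finset.add_sum_erase _ p (Finset.mem_univ i₀),
      ← Finset.add_sum_erase _ q (Finset.mem_univ i₀)] at hsum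
    rw [Finset.sum_sub_distrib]
    linarith
  have hi₀_nonneg : 0 ≤ p i₀ - q i₀ := hi₀ ▸ Finset.sum_nonneg fun i hi =>
    sub_nonneg.2 (hle i (Finset.ne_of_mem_erase hi))
  rw [← Finset.add_sum_erase _ _ (Finset.mem_univ i₀), hrest,
    abs_of_nonneg hi₀_nonneg, hi₀, two_mul]

lemma exists_nat_sum_eq_and_sum_abs_sub_le [Nonempty ι] {n : ℕ} {y : ι → ℝ} (hy : ∀ i, 0 ≤ y i)
    (hsum : ∑ i, y i = n) :
    ∃ v : ι → ℕ, ∑ i, v i = n ∧ ∑ i, |(v i : ℝ) - y i| ≤ 2 * ((Fintype.card ι : ℝ) - 1) := by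
  classical
  obtain ⟨i₀⟩ := ‹Nonempty ι›
  set others := Finset.univ.erase i₀
  have hfloor : ∑ i ∈ others, ⌊y i⌋₊ ≤ n := by
    rw [← Nat.cast_le (α := ℝ), ← hsum, Nat.cast_sum]
    exact (Finset.sum_le_sum fun i _ => Nat.floor_le (hy i)).trans
      (Finset.sum_le_univ_sum_of_nonneg hy)
  let v : ι → ℕ := Function.update (fun i => ⌊y i⌋₊) i₀ (n - ∑ i ∈ others, ⌊y i⌋₊)
  have hv_i₀ : v i₀ = n - ∑ i ∈ others, ⌊y i⌋₊ := Function.update_self ..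
  have hv (i : ι) (hi : i ≠ i₀) : v i = ⌊y i⌋₊ := Function.update_of_ne hi _ _
  have hv_sum : ∑ i, v i = n := by
    rw [← Finset.add_sum_erase _ _ (Finset.mem_univ i₀),
      Finset.sum_congr rfl fun i hi => hv i (Finset.ne_of_mem_erase hi), hv_i₀,
      Nat.sub_add_cancel hfloor]
  refine ⟨v, hv_sum, ?_⟩
  calc ∑ i, |(v i : ℝ) - y i|
      = 2 * ∑ i ∈ others, (y i - v i) :=
        sum_abs_sub_eq_two_mul_sum_erase i₀ (by rw [hsum, ← hv_sum, Nat.cast_sum])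
          fun i hi => by rw [hv i hi]; exact Nat.floor_le (hy i)
    _ ≤ 2 * ∑ i ∈ others, 1 := by
        gcongr with i hi
        rw [hv i (Finset.ne_of_mem_erase hi)]
        linarith [Nat.lt_floor_add_one (y i)]
    _ = 2 * ((Fintype.card ι : ℝ) - 1) := by
        rw [Finset.sum_const, Finset.card_erase_of_mem (Finset.mem_univ i₀), Finset.card_univ,
          nsmul_one, Nat.cast_pred (Fintype.card_pos_iff.2 ⟨i₀⟩)]

/-- The point `v / N`, in the `ℓ¹` space on `ι`; for tuples `v` of sum `N` these are the grid points
of mesh `1 / N` in the standard simplex. -/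
noncomputable def gridPoint (N : ℕ) (v : ι → ℕ) : PiLp 1 (fun _ : ι => ℝ) :=
  WithLp.toLp 1 fun i => (v i : ℝ) / N

lemma dist_gridPoint {N : ℕ} (hN : N ≠ 0) (v : ι → ℕ) (x : PiLp 1 (fun _ : ι => ℝ)) :
    dist (gridPoint N v) x = (∑ i, |(v i : ℝ) - N * x i|) / N := by
  have hN' : (0 : ℝ) < N := by positivity
  rw [PiLp.dist_eq_of_L1, Finset.sum_div]
  refine Finset.sum_congr rfl fun i _ => ?_
  rw [Real.dist_eq, ← abs_of_pos hN', ← abs_div, abs_of_pos hN', sub_div,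
    mul_div_cancel_left₀ _ hN'.ne', gridPoint]

lemma ofLp_gridPoint_mem_stdSimplex {N : ℕ} (hN : N ≠ 0) {v : ι → ℕ} (hv : ∑ i, v i = N) :
    (gridPoint N v).ofLp ∈ stdSimplex ℝ ι := by
  refine ⟨fun i => by simp only [gridPoint]; positivity, ?_⟩
  simp only [gridPoint]
  rw [← Finset.sum_div, ← Nat.cast_sum, hv, div_self (Nat.cast_ne_zero.2 hN)]

lemma dist_gridPoint_le_of_adj [DecidableEq ι] {N : ℕ} (hN : N ≠ 0) {v w : ι → ℕ}
    (h : (unitTransferGraph ι).Adj v w) : dist (gridPoint N v) (gridPoint N w) ≤ 2 / N := by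
  rw [dist_gridPoint hN]
  gcongr
  simpa [gridPoint, mul_div_cancel₀, hN] using sum_abs_sub_le_two_of_unitTransferGraph_adj h

lemma exists_dist_gridPoint_le [Nonempty ι] {N : ℕ} (hN : N ≠ 0) {x : ι → ℝ}
    (hx : x ∈ stdSimplex ℝ ι) :
    ∃ v : ι → ℕ, ∑ i, v i = N ∧
      dist (gridPoint N v) (WithLp.toLp 1 x) ≤ 2 * ((Fintype.card ι : ℝ) - 1) / N := by
  obtain ⟨v, hv_sum, hv⟩ := exists_nat_sum_eq_and_sum_abs_sub_le (n := N) (y := fun i => N * x i)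
    (fun i => mul_nonneg N.cast_nonneg (hx.1 i)) (by rw [← Finset.mul_sum, hx.2, mul_one])
  refine ⟨v, hv_sum, ?_⟩
  rw [dist_gridPoint hN]
  gcongr

lemma convex_ofLp_preimage_stdSimplex :
    Convex ℝ (WithLp.ofLp ⁻¹' stdSimplex ℝ ι : Set (PiLp 1 fun _ : ι => ℝ)) :=
  (convex_stdSimplex ℝ ι).linear_preimage (WithLp.linearEquiv 1 ℝ (ι → ℝ)).toLinearMap

end Grid

section GridCurve

variable {ι : Type*} [DecidableEq ι] {N : ℕ} {u v : ι → ℕ}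

/-- The polygonal curve through the grid points `v / N`, for `v` running along the walk `w`, with
time `2 / N` allotted to each edge; it rests at the last grid point after the end of the walk. -/
noncomputable def gridCurve (N : ℕ) (w : (unitTransferGraph ι).Walk u v) (θ : ℝ) :
    PiLp 1 (fun _ : ι => ℝ) :=
  polygonalPath (fun k => gridPoint N (w.getVert k)) (θ / (2 / N))

lemma gridCurve_two_div_mul_natCast (hN : N ≠ 0) (w : (unitTransferGraph ι).Walk u v) (k : ℕ) :
    gridCurve N w (2 / N * k) = gridPoint N (w.getVert k) := by
  have hstep : (2 / N : ℝ) ≠ 0 := by positivity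
  rw [gridCurve, mul_div_cancel_left₀ _ hstep, polygonalPath_natCast]

variable [Fintype ι]

lemma ofLp_gridCurve_mem_stdSimplex (hN : N ≠ 0) (hu : ∑ i, u i = N)
    (w : (unitTransferGraph ι).Walk u v) {θ : ℝ} (hθ : 0 ≤ θ) :
    (gridCurve N w θ).ofLp ∈ stdSimplex ℝ ι := by
  have hsum (k : ℕ) : ∑ i, w.getVert k i = N :=
    (sum_eq_of_unitTransferGraph_walk (w.take k)).symm.trans hu
  exact polygonalPath_mem (s := WithLp.ofLp ⁻¹' stdSimplex ℝ ι) convex_ofLp_preimage_stdSimplex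
    (fun k => ofLp_gridPoint_mem_stdSimplex hN (hsum k)) (by positivity)

lemma dist_gridPoint_getVert_succ_le (hN : N ≠ 0) (w : (unitTransferGraph ι).Walk u v) (k : ℕ) :
    dist (gridPoint N (w.getVert k)) (gridPoint N (w.getVert (k + 1))) ≤ 2 / N := by
  rcases lt_or_ge k w.length with hk | hk
  · exact dist_gridPoint_le_of_adj hN (w.adj_getVert_succ hk)
  · rw [w.getVert_of_length_le hk, w.getVert_of_length_le (hk.trans k.le_succ), dist_self]
    positivity

lemma dist_gridCurve_le (hN : N ≠ 0) (w : (unitTransferGraph ι).Walk u v) {θ θ' : ℝ}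
    (hθ : 0 ≤ θ) (hθ' : 0 ≤ θ') : dist (gridCurve N w θ) (gridCurve N w θ') ≤ |θ - θ'| :=
  dist_polygonalPath_div_le (dist_gridPoint_getVert_succ_le hN w) (by positivity) hθ hθ'

end GridCurve

theorem stmt14 (d N : ℕ) (hd : 2 ≤ d) (hN : 1 ≤ N)
    (L : ℝ) (hL : L = (2 / N) * (Nat.choose (N + d - 1) (d - 1) : ℝ)) :
    ∃ γ : ℝ → Fin d → ℝ,
      (∀ θ ∈ Set.Icc 0 L, inSimplex (γ θ)) ∧
      (∀ θ ∈ Set.Icc 0 L, ∀ θ' ∈ Set.Icc 0 L,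
        ∑ i, |γ θ i - γ θ' i| ≤ min |θ - θ'| 2) ∧
      ∀ x : Fin d → ℝ, inSimplex x →
        ∃ θ ∈ Set.Icc 0 L, ∑ i, |γ θ i - x i| ≤ 2 * ((d : ℝ) - 1) / N := by
  obtain ⟨d, rfl⟩ := Nat.exists_eq_add_of_le' (one_le_two.trans hd)
  have hN₀ : N ≠ 0 := Nat.one_le_iff_ne_zero.1 hN
  obtain ⟨w, hw_length, hw_mem⟩ := hasSweep_single_zero_last d N
  have hmem (θ : ℝ) (hθ : θ ∈ Set.Icc 0 L) : inSimplex (gridCurve N w θ).ofLp :=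
    ofLp_gridCurve_mem_stdSimplex hN₀ (by simp) w hθ.1
  refine ⟨fun θ => (gridCurve N w θ).ofLp, hmem, fun θ hθ θ' hθ' => le_min ?_ ?_, fun x hx => ?_⟩
  · exact (PiLp.dist_eq_of_L1 _ _).symm.trans_le (dist_gridCurve_le hN₀ w hθ.1 hθ'.1)
  · exact sum_abs_sub_le_two_of_mem_stdSimplex (hmem θ hθ) (hmem θ' hθ')
  · obtain ⟨v, hv_sum, hv⟩ := exists_dist_gridPoint_le hN₀ hx
    obtain ⟨k, rfl, hk⟩ := SimpleGraph.Walk.mem_support_iff_exists_getVert.1 (hw_mem v hv_sum)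
    have hk_choose : k ≤ (N + d).choose d := by omega
    refine ⟨2 / N * k, ⟨by positivity, ?_⟩, ?_⟩
    · rw [hL]
      gcongr
      exact hk_choose
    · simpa [gridCurve_two_div_mul_natCast hN₀, PiLp.dist_eq_of_L1, Real.dist_eq] using hv
end

section
/- Let X₁ and X₂ be nonempty finite sets. Then the maximum over all pairs of functions f₁: X₁ → X₂ and f₂: X₂ → X₁ of the quantity |{(x₁, x₂) ∈ X₁ × X₂ : f₁(x₁) = x₂ and f₂(x₂) = x₁}| equals min(|X₁|, |X₂|). Consequently, the maximum winning probability of the signalling game under uniformly drawn questions using classical deterministic strategies equals min(|X₁|,|X₂|)/(|X₁|·|X₂|) = 1/max(|X₁|, |X₂|). -/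
/-!
A question pair `(x₁, x₂)` is won by `(f₁, f₂)` exactly when `x₂ = f₁ x₁` and `x₁` is a fixed point
of `f₂ ∘ f₁`, so the number of won pairs is the number of fixed points of `f₂ ∘ f₁` and, by the
symmetry between the players, also that of `f₁ ∘ f₂`. Hence it is at most `min |X₁| |X₂|`, and an
injection of the smaller question set into the larger one, paired with a left inverse, attains this.
-/

open Finset Function

namespace SignallingGame

variable {X₁ X₂ : Type*} [Fintype X₁] [Fintype X₂] [DecidableEq X₁] [DecidableEq X₂]

/-- The question pairs that the deterministic strategy `(f₁, f₂)` wins in the signalling game, where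
each player has to name the question put to the other. -/
def winningPairs (f₁ : X₁ → X₂) (f₂ : X₂ → X₁) : Finset (X₁ × X₂) :=
  {p | f₁ p.1 = p.2 ∧ f₂ p.2 = p.1}

theorem mem_winningPairs {f₁ : X₁ → X₂} {f₂ : X₂ → X₁} {p : X₁ × X₂} :
    p ∈ winningPairs f₁ f₂ ↔ f₁ p.1 = p.2 ∧ f₂ p.2 = p.1 :=
  mem_filter_univ p

theorem card_winningPairs_comm (f₁ : X₁ → X₂) (f₂ : X₂ → X₁) :
    #(winningPairs f₁ f₂) = #(winningPairs f₂ f₁) :=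
  card_equiv (Equiv.prodComm X₁ X₂) fun _ ↦ by
    simp only [mem_winningPairs, Equiv.prodComm_apply, Prod.fst_swap, Prod.snd_swap, and_comm]

theorem card_winningPairs_eq_card_isFixedPt (f₁ : X₁ → X₂) (f₂ : X₂ → X₁) :
    #(winningPairs f₁ f₂) = #{x | IsFixedPt (f₂ ∘ f₁) x} := by
  refine card_nbij' Prod.fst (fun x ↦ (x, f₁ x)) ?_ ?_ ?_ ?_
  · intro p hp
    obtain ⟨hsnd, hfst⟩ := mem_winningPairs.1 hp
    exact (mem_filter_univ p.1).2 ((congrArg f₂ hsnd).trans hfst)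
  · intro x hx
    have hfix : IsFixedPt (f₂ ∘ f₁) x := (mem_filter_univ x).1 hx
    exact mem_winningPairs.2 ⟨rfl, hfix⟩
  · intro p hp
    exact Prod.ext rfl (mem_winningPairs.1 hp).1
  · exact fun _ _ ↦ rfl

theorem card_winningPairs_le_card_left (f₁ : X₁ → X₂) (f₂ : X₂ → X₁) :
    #(winningPairs f₁ f₂) ≤ Fintype.card X₁ :=
  (card_winningPairs_eq_card_isFixedPt f₁ f₂).trans_le (card_le_univ _)

theorem card_winningPairs_le_min (f₁ : X₁ → X₂) (f₂ : X₂ → X₁) :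
    #(winningPairs f₁ f₂) ≤ min (Fintype.card X₁) (Fintype.card X₂) :=
  le_min (card_winningPairs_le_card_left f₁ f₂)
    ((card_winningPairs_comm f₁ f₂).trans_le (card_winningPairs_le_card_left f₂ f₁))

theorem card_winningPairs_of_leftInverse {f₁ : X₁ → X₂} {f₂ : X₂ → X₁} (h : LeftInverse f₂ f₁) :
    #(winningPairs f₁ f₂) = Fintype.card X₁ := by
  have hfix : ∀ x, IsFixedPt (f₂ ∘ f₁) x := h
  rw [card_winningPairs_eq_card_isFixedPt, filter_true_of_mem fun x _ ↦ hfix x, card_univ]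

theorem exists_card_winningPairs_eq_card_left [Nonempty X₁]
    (h : Fintype.card X₁ ≤ Fintype.card X₂) :
    ∃ (f₁ : X₁ → X₂) (f₂ : X₂ → X₁), #(winningPairs f₁ f₂) = Fintype.card X₁ := by
  obtain ⟨e⟩ := Embedding.nonempty_of_card_le h
  exact ⟨e, invFun e, card_winningPairs_of_leftInverse (leftInverse_invFun e.injective)⟩

theorem exists_card_winningPairs_eq_min [Nonempty X₁] [Nonempty X₂] :
    ∃ (f₁ : X₁ → X₂) (f₂ : X₂ → X₁),
      #(winningPairs f₁ f₂) = min (Fintype.card X₁) (Fintype.card X₂) := by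
  rcases le_total (Fintype.card X₁) (Fintype.card X₂) with h | h
  · simpa only [min_eq_left h] using exists_card_winningPairs_eq_card_left h
  · obtain ⟨f₂, f₁, hcard⟩ := exists_card_winningPairs_eq_card_left h
    exact ⟨f₁, f₂, by rw [card_winningPairs_comm, hcard, min_eq_right h]⟩

theorem min_div_mul_eq_one_div_max {K : Type*} [CommGroupWithZero K] [LinearOrder K] {a b : K}
    (ha : a ≠ 0) (hb : b ≠ 0) : min a b / (a * b) = 1 / max a b := by
  have hmin : min a b ≠ 0 := by
    rcases min_choice a b with h | h <;> rwa [h]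
  rw [← min_mul_max a b, div_mul_cancel_left₀ hmin, one_div]

end SignallingGame

open SignallingGame

theorem stmt16 (X₁ X₂ : Type*) [Fintype X₁] [Fintype X₂] [Nonempty X₁] [Nonempty X₂]
    [DecidableEq X₁] [DecidableEq X₂] :
    IsGreatest
        {k : ℕ | ∃ (f₁ : X₁ → X₂) (f₂ : X₂ → X₁),
          k = (Finset.univ.filter
                (fun p : X₁ × X₂ => f₁ p.1 = p.2 ∧ f₂ p.2 = p.1)).card}
        (min (Fintype.card X₁) (Fintype.card X₂)) ∧
      ((min (Fintype.card X₁) (Fintype.card X₂) : ℝ) /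
          ((Fintype.card X₁ : ℝ) * (Fintype.card X₂ : ℝ)) =
        1 / (max (Fintype.card X₁) (Fintype.card X₂) : ℝ)) := by
  refine ⟨⟨?attained, ?upperBound⟩, ?probability⟩
  case attained =>
    obtain ⟨f₁, f₂, hcard⟩ := exists_card_winningPairs_eq_min (X₁ := X₁) (X₂ := X₂)
    exact ⟨f₁, f₂, hcard.symm⟩
  case upperBound =>
    rintro _ ⟨f₁, f₂, rfl⟩
    exact card_winningPairs_le_min f₁ f₂
  case probability =>
    exact min_div_mul_eq_one_div_max (Nat.cast_ne_zero.2 Fintype.card_ne_zero)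
      (Nat.cast_ne_zero.2 Fintype.card_ne_zero)
end

section
/- Define I₁: [0,1] × [0,1] → ℝ by I₁(p,q) = −((1+pq)/2)·ln((1+pq)/2) − ((1−pq)/2)·ln((1−pq)/2) − (1−pq)·ln 2, with the convention 0·ln 0 := 0. Then sup_{(p,q) ∈ [0,1]²} I₁(p,q) = h(4/5) − (2/5)·ln 2, where h(x) = −x ln x − (1−x) ln(1−x), and the supremum is attained at every (p,q) ∈ [0,1]² with pq = 3/5. -/
/-- The mutual information (in nats) of the noise-free subspace MAC N_F^(1) for
product input distributions (p, 1−p) ⊗ (q, 1−q), with 0·ln 0 := 0. -/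
noncomputable def I1 (p q : ℝ) : ℝ :=
  Real.negMulLog ((1 + p * q) / 2) + Real.negMulLog ((1 - p * q) / 2) -
    (1 - p * q) * Real.log 2

/-- The binary entropy in nats, with 0·ln 0 := 0. -/
noncomputable def binEnt (x : ℝ) : ℝ := Real.negMulLog x + Real.negMulLog (1 - x)

/-! Put `x = (1 + p q) / 2`, so that `1 - p q = 2 (1 - x)`. Then `I₁(p, q) = h(x) - 2 (1 - x) ln 2`
is the `5`-ary entropy `x ln 4 + h(x)` shifted by `-ln 4`, and the `5`-ary entropy is maximal at
`x = 1 - 1/5`, that is, at `p q = 3/5`. -/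

open Real Set

theorem isMaxOn_qaryEntropy {n : ℕ} (hn : 2 ≤ n) :
    IsMaxOn (qaryEntropy n) (Icc 0 1) (1 - 1 / n) :=
  isMaxOn_Icc_of_mono_anti (qaryEntropy_strictMonoOn hn).monotoneOn
    (qaryEntropy_strictAntiOn hn).antitoneOn

theorem I1_eq_qaryEntropy_sub_log (p q : ℝ) :
    I1 p q = qaryEntropy 5 ((1 + p * q) / 2) - log 4 := by
  have one_sub : 1 - (1 + p * q) / 2 = (1 - p * q) / 2 := by ring
  have log_four : log 4 = 2 * log 2 := by
    rw [show (4 : ℝ) = 2 ^ 2 by norm_num, log_pow, Nat.cast_ofNat]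
  have log_pred : log ((((5 : ℕ) : ℤ) - 1 : ℤ) : ℝ) = log 4 := by norm_num
  rw [I1, qaryEntropy, binEntropy_eq_negMulLog_add_negMulLog_one_sub, one_sub, log_pred, log_four]
  ring

theorem I1_of_mul_eq_three_fifths {p q : ℝ} (hpq : p * q = 3 / 5) :
    I1 p q = binEnt (4 / 5) - (2 / 5) * log 2 := by
  rw [I1, binEnt, hpq]
  norm_num

theorem I1_le_of_mul_mem_Icc {p q : ℝ} (hpq : p * q ∈ Icc (-1) 1) :
    I1 p q ≤ binEnt (4 / 5) - (2 / 5) * log 2 := by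
  have mem : (1 + p * q) / 2 ∈ Icc (0 : ℝ) 1 := by
    constructor <;> linarith [hpq.1, hpq.2]
  calc I1 p q = qaryEntropy 5 ((1 + p * q) / 2) - log 4 := I1_eq_qaryEntropy_sub_log p q
    _ ≤ qaryEntropy 5 (1 - 1 / (5 : ℕ)) - log 4 :=
      sub_le_sub_right (isMaxOn_qaryEntropy (by norm_num) mem) _
    _ = I1 (3 / 5) 1 := by rw [I1_eq_qaryEntropy_sub_log]; norm_num
    _ = binEnt (4 / 5) - (2 / 5) * log 2 := I1_of_mul_eq_three_fifths (mul_one _)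

theorem stmt18 :
    IsGreatest {y | ∃ p ∈ Set.Icc (0 : ℝ) 1, ∃ q ∈ Set.Icc (0 : ℝ) 1, y = I1 p q}
        (binEnt (4 / 5) - (2 / 5) * Real.log 2) ∧
      ∀ p ∈ Set.Icc (0 : ℝ) 1, ∀ q ∈ Set.Icc (0 : ℝ) 1, p * q = 3 / 5 →
        I1 p q = binEnt (4 / 5) - (2 / 5) * Real.log 2 := by
  refine ⟨⟨?attained, ?upper_bound⟩, fun _ _ _ _ hpq ↦ I1_of_mul_eq_three_fifths hpq⟩
  case attained =>
    exact ⟨3 / 5, by norm_num, 1, by norm_num, (I1_of_mul_eq_three_fifths (mul_one _)).symm⟩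
  case upper_bound =>
    rintro _ ⟨p, hp, q, hq, rfl⟩
    have hpq : p * q ∈ Icc 0 1 := unitInterval.mul_mem hp hq
    exact I1_le_of_mul_mem_Icc (Icc_subset_Icc_left (by norm_num) hpq)
end

section
/- Define I₂: [0,1] × [0,1] → ℝ by I₂(p,q) = −((p+q)/2)·ln((p+q)/2) − (1−(p+q)/2)·ln(1−(p+q)/2) − (p + q − 2pq)·ln 2, with the convention 0·ln 0 := 0. Then sup_{(p,q) ∈ [0,1]²} I₂(p,q) = (1/2)·ln 2, and the supremum is attained at p = q = 1/2. -/
/-- The mutual information (in nats) of the noise-free subspace MAC N_F^(2) for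
product input distributions (p, 1−p) ⊗ (q, 1−q), with 0·ln 0 := 0. -/
noncomputable def I2 (p q : ℝ) : ℝ :=
  Real.negMulLog ((p + q) / 2) + Real.negMulLog (1 - (p + q) / 2) -
    (p + q - 2 * p * q) * Real.log 2

/-!
Put `s = (p + q) / 2` and let `h` be the binary entropy. Since
`p + q - 2pq = 1/2 - 2 (s - 1/2)² + (p - q)² / 2`, the claim reduces to
`h s + 2 ln 2 · (s - 1/2)² ≤ ln 2`. As `h'' s = -1 / (s (1 - s)) ≤ -4`, the entropy is
`4`-strongly concave; applied to the midpoint of `s` and `1 - s` this gives the Pinsker-type bound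
`h s ≤ ln 2 - 2 (s - 1/2)²`, and `ln 2 ≤ 1` finishes the proof.
-/

open Real Set

lemma strongConcaveOn_of_hasDerivWithinAt2_le {D : Set ℝ} (hD : Convex ℝ D) {f f' f'' : ℝ → ℝ}
    {m : ℝ} (hf : ContinuousOn f D)
    (hf' : ∀ x ∈ interior D, HasDerivWithinAt f (f' x) (interior D) x)
    (hf'' : ∀ x ∈ interior D, HasDerivWithinAt f' (f'' x) (interior D) x)
    (hf''_le : ∀ x ∈ interior D, f'' x ≤ -m) : StrongConcaveOn D m f := by
  rw [strongConcaveOn_iff_convex]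
  simp only [norm_eq_abs, sq_abs]
  refine concaveOn_of_hasDerivWithinAt2_nonpos hD (f' := fun x ↦ f' x + m * x)
    (f'' := fun x ↦ f'' x + m) (by fun_prop) (fun x hx ↦ ?_) (fun x hx ↦ ?_) (fun x hx ↦ ?_)
  · have hsq : HasDerivAt (fun x : ℝ ↦ m / 2 * x ^ 2) (m * x) x :=
      ((hasDerivAt_pow 2 x).const_mul (m / 2)).congr_deriv (by push_cast; ring)
    exact (hf' x hx).add hsq.hasDerivWithinAt
  · exact (hf'' x hx).add (hasDerivAt_const_mul m).hasDerivWithinAt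
  · linarith [hf''_le x hx]

lemma four_le_inv_add_inv_one_sub {x : ℝ} (hx : x ∈ Ioo 0 1) : 4 ≤ x⁻¹ + (1 - x)⁻¹ := by
  have hx₀ : 0 < x := hx.1
  have hx₁ : 0 < 1 - x := sub_pos.2 hx.2
  have hdiff : x⁻¹ + (1 - x)⁻¹ - 4 = (2 * x - 1) ^ 2 / (x * (1 - x)) := by
    field_simp
    ring
  exact sub_nonneg.1 (hdiff ▸ by positivity)

lemma strongConcaveOn_binEntropy : StrongConcaveOn (Icc 0 1) 4 binEntropy := by
  refine strongConcaveOn_of_hasDerivWithinAt2_le (convex_Icc 0 1)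
    (f' := fun x ↦ log (1 - x) - log x) (f'' := fun x ↦ -(x⁻¹ + (1 - x)⁻¹))
    binEntropy_continuous.continuousOn ?_ ?_ ?_ <;> rw [interior_Icc] <;> intro x hx
  · exact (hasDerivAt_binEntropy hx.1.ne' hx.2.ne).hasDerivWithinAt
  · have hlog := hasDerivAt_log hx.1.ne'
    have hlog_one_sub := ((hasDerivAt_id' x).const_sub 1).log (sub_pos.2 hx.2).ne'
    exact ((hlog_one_sub.sub hlog).congr_deriv (by ring)).hasDerivWithinAt
  · exact neg_le_neg (four_le_inv_add_inv_one_sub hx)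

lemma binEntropy_le_log_two_sub_sq {s : ℝ} (hs : s ∈ Icc 0 1) :
    binEntropy s ≤ log 2 - 2 * (s - 1 / 2) ^ 2 := by
  have hs' : 1 - s ∈ Icc (0 : ℝ) 1 := Icc.one_sub_mem hs
  have hmid : (1 / 2 : ℝ) * s + 1 / 2 * (1 - s) = 2⁻¹ := by ring
  have hconc := strongConcaveOn_binEntropy.2 hs hs'
    one_half_pos.le one_half_pos.le (add_halves 1)
  simp only [smul_eq_mul, hmid, binEntropy_one_sub, binEntropy_two_inv, norm_eq_abs, sq_abs]
    at hconc
  linarith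

lemma I2_eq_binEntropy_sub (p q : ℝ) :
    I2 p q = binEntropy ((p + q) / 2) -
      (1 / 2 - 2 * ((p + q) / 2 - 1 / 2) ^ 2 + (p - q) ^ 2 / 2) * log 2 := by
  rw [I2, binEntropy_eq_negMulLog_add_negMulLog_one_sub]
  ring

lemma I2_half_half : I2 (1 / 2) (1 / 2) = (1 / 2) * log 2 := by
  have hmean : ((1 / 2 : ℝ) + 1 / 2) / 2 = 2⁻¹ := by norm_num
  rw [I2_eq_binEntropy_sub, hmean, binEntropy_two_inv]
  ring

lemma I2_le_half_log_two {p q : ℝ} (hpq : (p + q) / 2 ∈ Icc 0 1) :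
    I2 p q ≤ (1 / 2) * log 2 := by
  rw [I2_eq_binEntropy_sub]
  set s := (p + q) / 2
  have hlog : 0 ≤ 1 - log 2 := by linarith [log_le_sub_one_of_pos (zero_lt_two' ℝ)]
  calc binEntropy s - (1 / 2 - 2 * (s - 1 / 2) ^ 2 + (p - q) ^ 2 / 2) * log 2
      ≤ log 2 - 2 * (s - 1 / 2) ^ 2 -
          (1 / 2 - 2 * (s - 1 / 2) ^ 2 + (p - q) ^ 2 / 2) * log 2 := by
        gcongr
        exact binEntropy_le_log_two_sub_sq hpq
    _ = (1 / 2) * log 2 -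
          (2 * (1 - log 2) * (s - 1 / 2) ^ 2 + (p - q) ^ 2 / 2 * log 2) := by ring
    _ ≤ (1 / 2) * log 2 := sub_le_self _ (by positivity)

theorem stmt19 :
    IsGreatest {y | ∃ p ∈ Set.Icc (0 : ℝ) 1, ∃ q ∈ Set.Icc (0 : ℝ) 1, y = I2 p q}
        ((1 / 2) * Real.log 2) ∧
      I2 (1 / 2) (1 / 2) = (1 / 2) * Real.log 2 := by
  refine ⟨⟨⟨1 / 2, by norm_num, 1 / 2, by norm_num, I2_half_half.symm⟩, ?_⟩, I2_half_half⟩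
  rintro _ ⟨p, ⟨hp₀, hp₁⟩, q, ⟨hq₀, hq₁⟩, rfl⟩
  exact I2_le_half_log_two ⟨by linarith, by linarith⟩
end
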